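/- arXiv:2308.07218 — 3 statements merged into one kernel-verified Lean document; each statement's English description precedes it below -/
import Mathlib

section
/- For every positive integer k that is equal to 1 or is even, and for every natural number n, there exists a finite graph G (parallel edges allowed) together with a set T ⊆ V(G) of terminals such that |V(G)| ≥ n, the set T is 3k-edge-connected in G, and G does not contain k pairwise edge-disjoint T-connectors. In particular, the conjecture of West and Wu — that for every positive integer k and every graph with terminals (G,T), if T is 3k-edge-connected in G then G admits k pairwise edge-disjoint T-connectors — is false. -/
/-!
All counterexamples are *networks*. A network has pairs of terminals, called blobs, joined to each
other by links. A link is a claw whose centre, the middle, has two ports as neighbours; a port is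
adjacent to both terminals of the blob it is attached to, and the third edge at the middle may lead
to a further terminal, a top. A network inherits edge-connectivity from the graph of blobs and
links (`edgeConnectedIn_net`), and isolated vertices make it as large as required.

A `T`-path of a network either joins the two terminals of a blob through a port, or crosses a link
from one blob to another, or leads from a blob to a top (`exists_fits`). As ports and middles have
degree three, each is used by at most one of a family of edge-disjoint `T`-paths. Each of `k`
disjoint connectors contains a spanning tree of `T`, and a set of `c` blobs spans at most `2 * c - 1`
edges of it; `exists_profile` collects the resulting linear inequalities between the numbers of
paths of the three kinds at the various links. It remains to find graphs of blobs for which these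
inequalities have no solution.

For even `k` the blobs form a ring in which neighbours are joined by `3 * k / 2` parallel links, so
that `3 * k` links meet each blob and every cut of the ring. The blobs are grouped into triples, and
from each of `6 * k` triples one link leads to one of two tops, which thus have degree `3 * k`. Call
it a deficit when a blob has fewer than `k` paths of the first kind, or a bundle fewer than `k` paths
of the second kind (a surplus counts as a negative deficit). A path to a top forces
deficits nearby, and by `ring_sum` the deficits sum up to at least the number of paths to the tops;
but counting tree edges, the sum is smaller than this number by exactly `k` (`ring_false`).

For `k = 1` there are no tops, and the graph of blobs is cubic: three copies of the Petersen graph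
minus a vertex, linked to each other in a circle and each to a common hub. The inequalities leave so
little room that in one of the three copies exactly two of the three links at every blob are
crossed. In the Petersen graph the crossed links form the complement of a perfect
matching, hence two pentagons, one of which lies inside the copy. But the links crossed by a
spanning tree that has an edge inside each of the blobs form no cycle (`cub_false`). The cubic graph
is 3-edge-connected: any two links are avoided by one of thirteen listed spanning trees.
-/

/-
Graphs with terminals are modelled as multigraphs: a vertex type `V`, an edge
type `E`, and an incidence map `ends : E → Sym2 V` assigning to each edge its
(unordered) pair of endvertices.  Parallel edges are allowed since distinct
edges may have equal endpoint pairs.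
-/

namespace TConnectors

variable {V E : Type}

/-- A walk in a multigraph given by an incidence map `ends : E → Sym2 V`. -/
inductive Walk (ends : E → Sym2 V) : V → V → Type where
  | nil (v : V) : Walk ends v v
  | cons {u v w : V} (e : E) (he : ends e = s(u, v)) (p : Walk ends v w) : Walk ends u w

/-- The list of edges of a walk. -/
def Walk.edges {ends : E → Sym2 V} : ∀ {u v : V}, Walk ends u v → List E
  | _, _, .nil _ => []
  | _, _, .cons e _ p => e :: p.edges

/-- The list of vertices of a walk. -/
def Walk.support {ends : E → Sym2 V} : ∀ {u v : V}, Walk ends u v → List V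
  | _, v, .nil _ => [v]
  | u, _, .cons _ _ p => u :: p.support

/-- `T` is `d`-edge-connected in the multigraph: there is no edge-cut of
size smaller than `d` separating two vertices of `T`, i.e. after deleting any
set of fewer than `d` edges, any two terminals are still joined by a walk. -/
def EdgeConnectedIn (ends : E → Sym2 V) (T : Set V) (d : ℕ) : Prop :=
  ∀ S : Finset E, S.card < d → ∀ t₁ ∈ T, ∀ t₂ ∈ T,
    ∃ p : Walk ends t₁ t₂, ∀ e ∈ p.edges, e ∉ S

/-- A `T`-path: a nontrivial path whose endvertices belong to `T` and whose
internal vertices lie outside `T`. -/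
def IsTPath (ends : E → Sym2 V) (T : Set V) {u v : V} (p : Walk ends u v) : Prop :=
  u ∈ T ∧ v ∈ T ∧ p.support.Nodup ∧ p.edges ≠ [] ∧
    ∀ w ∈ p.support.tail.dropLast, w ∉ T

/-- `C` is the edge set of a `T`-connector: a union of a family of pairwise
edge-disjoint `T`-paths such that the auxiliary multigraph on vertex set `T`,
with one edge joining the two endvertices of each `T`-path of the family,
is connected. -/
def IsConnector (ends : E → Sym2 V) (T : Set V) (C : Set E) : Prop :=
  ∃ (m : ℕ) (a b : Fin m → V) (p : ∀ i, Walk ends (a i) (b i)),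
    (∀ i, IsTPath ends T (p i)) ∧
    (∀ i j, i ≠ j → ∀ e ∈ (p i).edges, e ∉ (p j).edges) ∧
    C = { e | ∃ i, e ∈ (p i).edges } ∧
    ∀ t₁ ∈ T, ∀ t₂ ∈ T,
      Relation.ReflTransGen
        (fun x y => ∃ i, (a i = x ∧ b i = y) ∨ (a i = y ∧ b i = x)) t₁ t₂

/-! ### Walks avoiding a set of edges -/

theorem exists_walk_of_reflTransGen {ends : E → Sym2 V} {S : Finset E} {x y : V}
    (h : Relation.ReflTransGen (fun a b => ∃ e, e ∉ S ∧ ends e = s(a, b)) x y) :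
    ∃ p : Walk ends x y, ∀ e ∈ p.edges, e ∉ S := by
  induction h using Relation.ReflTransGen.head_induction_on with
  | refl => exact ⟨.nil _, by simp [Walk.edges]⟩
  | head hab _ ih =>
    obtain ⟨e, he, hab⟩ := hab
    obtain ⟨p, hp⟩ := ih
    refine ⟨.cons e hab p, ?_⟩
    intro e' he'
    rcases List.mem_cons.1 he' with rfl | h
    · exact he
    · exact hp _ h

theorem Walk.support_ne_nil {ends : E → Sym2 V} {u v : V} (p : Walk ends u v) :
    p.support ≠ [] := by
  cases p <;> simp [Walk.support]

/-- A walk starting in `T` none of whose vertices before the last lies in `T` is trivial. -/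
theorem Walk.eq_of_mem {ends : E → Sym2 V} {T : Set V} {u v : V} (p : Walk ends u v)
    (hu : u ∈ T) (h : ∀ w ∈ p.support.dropLast, w ∉ T) : u = v := by
  cases p with
  | nil => rfl
  | cons e he q =>
    refine absurd hu (h u ?_)
    rw [Walk.support, List.dropLast_cons_of_ne_nil q.support_ne_nil]
    simp

/-- The first step of a walk that leads from outside `T` to a vertex of `T`. -/
theorem Walk.exists_step {ends : E → Sym2 V} {T : Set V} {u v : V} (p : Walk ends u v)
    (hu : u ∉ T) (hv : v ∈ T) (hn : p.support.Nodup)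
    (h : ∀ w ∈ p.support.dropLast, w ∉ T) :
    ∃ (w : V) (e : E) (q : Walk ends w v), ends e = s(u, w) ∧ p.edges = e :: q.edges ∧
      p.support = u :: q.support ∧ u ∉ q.support ∧ q.support.Nodup ∧
      ∀ w ∈ q.support.dropLast, w ∉ T := by
  cases p with
  | nil => exact absurd hv hu
  | cons e he q =>
    rw [Walk.support, List.nodup_cons] at hn
    refine ⟨_, e, q, he, rfl, rfl, hn.1, hn.2, fun w hw => h w ?_⟩
    rw [Walk.support, List.dropLast_cons_of_ne_nil q.support_ne_nil]
    exact List.mem_cons_of_mem _ hw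

theorem Walk.start_mem_support {ends : E → Sym2 V} {u v : V} (p : Walk ends u v) :
    u ∈ p.support := by
  cases p <;> simp [Walk.support]

theorem Walk.end_mem_support {ends : E → Sym2 V} {u v : V} (p : Walk ends u v) :
    v ∈ p.support := by
  induction p with
  | nil => simp [Walk.support]
  | cons _ _ _ ih => exact List.mem_cons_of_mem _ ih

/-! ### Spanning trees -/

/-- A finite family of edges that connects `T` contains a spanning tree `F` of `T`: it has
`|T| - 1` edges, and every nonempty vertex set `W` spans at most `|W| - 1` of them. -/
theorem exists_tree {X I : Type} [DecidableEq X] [DecidableEq I] (T : Finset X)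
    (hT : T.Nonempty) (a b : I → X) (ha : ∀ i, a i ∈ T) (hb : ∀ i, b i ∈ T)
    (hc : ∀ t₁ ∈ T, ∀ t₂ ∈ T, Relation.ReflTransGen
        (fun x y => ∃ i, (a i = x ∧ b i = y) ∨ (a i = y ∧ b i = x)) t₁ t₂) :
    ∃ F : Finset I, F.card + 1 = T.card ∧ ∀ W : Finset X, W.Nonempty →
      (F.filter fun i => a i ∈ W ∧ b i ∈ W).card + 1 ≤ W.card := by
  -- grow a tree on a vertex set `S` one vertex at a time
  suffices H : ∀ m : ℕ, m + 1 ≤ T.card → ∃ (S : Finset X) (F : Finset I), S ⊆ T ∧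
      S.card = m + 1 ∧ F.card = m ∧ (∀ i ∈ F, a i ∈ S ∧ b i ∈ S) ∧
      ∀ W : Finset X, W.Nonempty →
        (F.filter fun i => a i ∈ W ∧ b i ∈ W).card + 1 ≤ W.card by
    have hpos := hT.card_pos
    obtain ⟨S, F, -, hS, hF, -, h⟩ := H (T.card - 1) (by omega)
    exact ⟨F, by omega, h⟩
  intro m
  induction m with
  | zero =>
    intro _
    obtain ⟨r, hr⟩ := hT
    exact ⟨{r}, ∅, by simpa using hr, by simp, by simp, by simp,
      fun W hW => by simpa using hW.card_pos⟩
  | succ m ih =>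
    intro hm
    obtain ⟨S, F, hST, hS, hF, hFS, hW⟩ := ih (by omega)
    obtain ⟨r, hr⟩ : S.Nonempty := Finset.card_pos.1 (by omega)
    obtain ⟨t, htT, htS⟩ : ∃ t ∈ T, t ∉ S := by
      by_contra! hcon
      have := Finset.card_le_card (show T ⊆ S from hcon)
      omega
    -- an edge leaving `S`
    obtain ⟨i, x, y, hx, hy, hi⟩ : ∃ i x y, x ∈ S ∧ y ∉ S ∧
        ((a i = x ∧ b i = y) ∨ (a i = y ∧ b i = x)) := by
      by_contra! hcon
      have : ∀ z, Relation.ReflTransGen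
          (fun x y => ∃ i, (a i = x ∧ b i = y) ∨ (a i = y ∧ b i = x)) r z → z ∈ S := by
        intro z hz
        induction hz with
        | refl => exact hr
        | tail _ hyz ih =>
          obtain ⟨i, hi⟩ := hyz
          by_contra hzS
          have := hcon i _ _ ih hzS
          tauto
      exact htS (this t (hc r (hST hr) t htT))
    have hyT : y ∈ T := by
      rcases hi with ⟨_, h⟩ | ⟨h, _⟩
      · exact h ▸ hb i
      · exact h ▸ ha i
    have hiF : i ∉ F := fun h => by
      have := hFS i h
      rcases hi with ⟨h1, h2⟩ | ⟨h1, h2⟩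
      · exact hy (h2 ▸ this.2)
      · exact hy (h1 ▸ this.1)
    refine ⟨insert y S, insert i F, Finset.insert_subset hyT hST, ?_, ?_, ?_, ?_⟩
    · rw [Finset.card_insert_of_notMem hy, hS]
    · rw [Finset.card_insert_of_notMem hiF, hF]
    · intro l hl
      rcases Finset.mem_insert.1 hl with rfl | hl
      · rcases hi with ⟨h1, h2⟩ | ⟨h1, h2⟩ <;> simp [h1, h2, hx]
      · exact ⟨Finset.mem_insert_of_mem (hFS l hl).1, Finset.mem_insert_of_mem (hFS l hl).2⟩
    · intro W hWne
      by_cases hyW : y ∈ W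
      · -- only the new edge meets `y`
        have hsub : ((insert i F).filter fun i => a i ∈ W ∧ b i ∈ W) ⊆
            insert i (F.filter fun i => a i ∈ W.erase y ∧ b i ∈ W.erase y) := by
          intro l hl
          rw [Finset.mem_filter, Finset.mem_insert] at hl
          rcases hl with ⟨rfl | hl, h1, h2⟩
          · exact Finset.mem_insert_self _ _
          · refine Finset.mem_insert_of_mem (Finset.mem_filter.2 ⟨hl, ?_, ?_⟩)
            · exact Finset.mem_erase.2 ⟨fun h => hy (h ▸ (hFS l hl).1), h1⟩
            · exact Finset.mem_erase.2 ⟨fun h => hy (h ▸ (hFS l hl).2), h2⟩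
        have hcard := Finset.card_erase_of_mem hyW
        have hWpos := hWne.card_pos
        by_cases hne : (W.erase y).Nonempty
        · have h1 := hW _ hne
          have h2 := Finset.card_le_card hsub
          have h3 := Finset.card_insert_le i
            (F.filter fun i => a i ∈ W.erase y ∧ b i ∈ W.erase y)
          omega
        · have hWy : W = {y} := by
            rw [Finset.not_nonempty_iff_eq_empty, Finset.erase_eq_empty_iff] at hne
            exact hne.resolve_left hWne.ne_empty
          have : ((insert i F).filter fun i => a i ∈ W ∧ b i ∈ W) = ∅ := by
            rw [Finset.filter_eq_empty_iff]
            rintro l hl ⟨h1, h2⟩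
            rw [hWy, Finset.mem_singleton] at h1 h2
            rcases Finset.mem_insert.1 hl with rfl | hl
            · rcases hi with ⟨h3, h4⟩ | ⟨h3, h4⟩
              · exact hy (h1 ▸ h3 ▸ hx)
              · exact hy (h2 ▸ h4 ▸ hx)
            · exact hy (h1 ▸ (hFS l hl).1)
          rw [this, Finset.card_empty]
          omega
      · rw [Finset.filter_insert, if_neg]
        · exact hW W hWne
        · rintro ⟨h1, h2⟩
          rcases hi with ⟨h3, h4⟩ | ⟨h3, h4⟩
          · exact hyW (h4 ▸ h2)
          · exact hyW (h3 ▸ h1)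

/-! ### Networks of blobs and links -/

/-- The vertices of a network with blobs `B`, links `J` and tops `M`. A blob `b` consists of
the two terminals `term b true` and `term b false`; the tops are terminals as well. The link
`j` contributes the nonterminals `mid j`, `port j true`, `port j false` and `dum j`; the last
is the far end of the third edge at `mid j` when that edge leads to no top. The `n` vertices
`pad i` are isolated. -/
inductive Vx (B J M : Type) (n : ℕ) : Type where
  | term (b : B) (σ : Bool)
  | top (m : M)
  | port (j : J) (s : Bool)
  | mid (j : J)
  | dum (j : J)
  | pad (i : Fin n)

/-- The edges of a network: `pe j s σ` joins `port j s` to a terminal of a blob, `ms j s` joins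
`mid j` to `port j s`, and `mt j` joins `mid j` to its top (or to `dum j`). -/
inductive Ed (J : Type) : Type where
  | pe (j : J) (s σ : Bool)
  | ms (j : J) (s : Bool)
  | mt (j : J)

variable {B J M : Type} {n : ℕ}

instance [Finite B] [Finite J] [Finite M] : Finite (Vx B J M n) := by
  refine Finite.of_surjective
    (α := (B × Bool) ⊕ M ⊕ (J × Bool) ⊕ J ⊕ J ⊕ Fin n)
    (fun x => match x with
      | .inl (b, σ) => .term b σ
      | .inr (.inl m) => .top m
      | .inr (.inr (.inl (j, s))) => .port j s
      | .inr (.inr (.inr (.inl j))) => .mid j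
      | .inr (.inr (.inr (.inr (.inl j)))) => .dum j
      | .inr (.inr (.inr (.inr (.inr i)))) => .pad i) ?_
  intro x
  cases x with
  | term b σ => exact ⟨.inl (b, σ), rfl⟩
  | top m => exact ⟨.inr (.inl m), rfl⟩
  | port j s => exact ⟨.inr (.inr (.inl (j, s))), rfl⟩
  | mid j => exact ⟨.inr (.inr (.inr (.inl j))), rfl⟩
  | dum j => exact ⟨.inr (.inr (.inr (.inr (.inl j)))), rfl⟩
  | pad i => exact ⟨.inr (.inr (.inr (.inr (.inr i)))), rfl⟩

instance [Finite J] : Finite (Ed J) := by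
  refine Finite.of_surjective (α := (J × Bool × Bool) ⊕ (J × Bool) ⊕ J)
    (fun x => match x with
      | .inl (j, s, σ) => .pe j s σ
      | .inr (.inl (j, s)) => .ms j s
      | .inr (.inr j) => .mt j) ?_
  intro x
  cases x with
  | pe j s σ => exact ⟨.inl (j, s, σ), rfl⟩
  | ms j s => exact ⟨.inr (.inl (j, s)), rfl⟩
  | mt j => exact ⟨.inr (.inr j), rfl⟩

theorem le_card_Vx [Finite B] [Finite J] [Finite M] : n ≤ Nat.card (Vx B J M n) := by
  have := Nat.card_le_card_of_injective (fun i : Fin n => (Vx.pad i : Vx B J M n))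
    (fun i i' h => by simpa using h)
  simpa using this

/-- The incidence map of a network: the port `(j, s)` is attached to the blob `en j s`, and the
link `j` to the top `tg j`, if there is one. -/
def netEnds (n : ℕ) (en : J → Bool → B) (tg : J → Option M) : Ed J → Sym2 (Vx B J M n)
  | .pe j s σ => s(.port j s, .term (en j s) σ)
  | .ms j s => s(.mid j, .port j s)
  | .mt j => s(.mid j, (tg j).elim (.dum j) .top)

/-- The terminals of a network. -/
def netT (B J M : Type) (n : ℕ) : Set (Vx B J M n) :=
  { x | (∃ b σ, x = .term b σ) ∨ ∃ m, x = .top m }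

@[simp] theorem term_mem (b : B) (σ : Bool) : (Vx.term b σ : Vx B J M n) ∈ netT B J M n :=
  Or.inl ⟨b, σ, rfl⟩

@[simp] theorem top_mem (m : M) : (Vx.top m : Vx B J M n) ∈ netT B J M n :=
  Or.inr ⟨m, rfl⟩

@[simp] theorem port_notMem (j : J) (s : Bool) :
    (Vx.port j s : Vx B J M n) ∉ netT B J M n := by simp [netT]

@[simp] theorem mid_notMem (j : J) : (Vx.mid j : Vx B J M n) ∉ netT B J M n := by simp [netT]

@[simp] theorem dum_notMem (j : J) : (Vx.dum j : Vx B J M n) ∉ netT B J M n := by simp [netT]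

section Incidence

variable {en : J → Bool → B} {tg : J → Option M} {e : Ed J} {w : Vx B J M n}

theorem ends_term {b : B} {σ : Bool} (h : netEnds n en tg e = s(.term b σ, w)) :
    ∃ j s, e = .pe j s σ ∧ en j s = b ∧ w = .port j s := by
  cases e with
  | pe j s τ =>
    simp only [netEnds, Sym2.eq_iff] at h
    rcases h with ⟨h, -⟩ | ⟨h1, h2⟩
    · cases h
    · cases h2; exact ⟨j, s, rfl, rfl, h1.symm⟩
  | ms j s => simp [netEnds] at h
  | mt j =>
    cases ht : tg j <;> simp [netEnds, ht] at h

theorem ends_top {m : M} (h : netEnds n en tg e = s(.top m, w)) :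
    ∃ j, e = .mt j ∧ tg j = some m ∧ w = .mid j := by
  cases e with
  | pe j s τ => simp [netEnds] at h
  | ms j s => simp [netEnds] at h
  | mt j =>
    cases ht : tg j with
    | none => simp [netEnds, ht] at h
    | some m' =>
      simp only [netEnds, Sym2.eq_iff, ht, Option.elim] at h
      rcases h with ⟨h, -⟩ | ⟨h1, h2⟩
      · cases h
      · cases h2; exact ⟨j, rfl, ht, h1.symm⟩

theorem ends_port {j : J} {s : Bool} (h : netEnds n en tg e = s(.port j s, w)) :
    (∃ σ, e = .pe j s σ ∧ w = .term (en j s) σ) ∨ (e = .ms j s ∧ w = .mid j) := by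
  cases e with
  | pe j s τ =>
    simp only [netEnds, Sym2.eq_iff] at h
    rcases h with ⟨h1, h2⟩ | ⟨-, h⟩
    · cases h1; exact Or.inl ⟨τ, rfl, h2.symm⟩
    · cases h
  | ms j s =>
    simp only [netEnds, Sym2.eq_iff] at h
    rcases h with ⟨h, -⟩ | ⟨h1, h2⟩
    · cases h
    · cases h2; exact Or.inr ⟨rfl, h1.symm⟩
  | mt j =>
    cases ht : tg j <;> simp [netEnds, ht] at h

theorem ends_mid {j : J} (h : netEnds n en tg e = s(.mid j, w)) :
    (∃ s, e = .ms j s ∧ w = .port j s) ∨ (e = .mt j ∧ w = (tg j).elim (.dum j) .top) := by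
  cases e with
  | pe j s τ => simp [netEnds] at h
  | ms j s =>
    simp only [netEnds, Sym2.eq_iff] at h
    rcases h with ⟨h1, h2⟩ | ⟨-, h⟩
    · cases h1; exact Or.inl ⟨s, rfl, h2.symm⟩
    · cases h
  | mt j =>
    simp only [netEnds, Sym2.eq_iff] at h
    rcases h with ⟨h1, h2⟩ | ⟨h1, h2⟩
    · cases h1; exact Or.inr ⟨rfl, h2.symm⟩
    · cases ht : tg j <;> simp [ht] at h2

theorem ends_dum {j : J} (h : netEnds n en tg e = s(.dum j, w)) : w = .mid j := by
  cases e with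
  | pe j s τ => simp [netEnds] at h
  | ms j s => simp [netEnds] at h
  | mt j =>
    simp only [netEnds, Sym2.eq_iff] at h
    rcases h with ⟨h1, h2⟩ | ⟨h1, h2⟩
    · cases h1
    · cases ht : tg j with
      | none => rw [ht] at h2; cases h2; exact h1.symm
      | some m => rw [ht] at h2; cases h2

end Incidence

/-! ### The paths between terminals of a network -/

/-- The kinds of `T`-paths in a network. `N j s` goes from one terminal of a blob to the other
through `port j s`, `C j` crosses the link `j` from one blob to the next, and `R j s` goes from
the blob at `port j s` to the top of the link `j`. -/
inductive Use (J : Type) : Type where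
  | N (j : J) (s : Bool)
  | C (j : J)
  | R (j : J) (s : Bool)
  deriving DecidableEq

/-- `Fits en tg x u v l` says that a path from `u` to `v` with edge list `l` is of kind `x`. -/
def Fits (en : J → Bool → B) (tg : J → Option M) (x : Use J) (u v : Vx B J M n)
    (l : List (Ed J)) : Prop :=
  match x with
  | .N j s => (∀ σ, Ed.pe j s σ ∈ l) ∧ (∃ σ, u = .term (en j s) σ) ∧ ∃ σ, v = .term (en j s) σ
  | .C j => (∀ s, Ed.ms j s ∈ l ∧ ∃ σ, Ed.pe j s σ ∈ l) ∧
      ∃ s, (∃ σ, u = .term (en j s) σ) ∧ ∃ σ, v = .term (en j (!s)) σ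
  | .R j s => (Ed.ms j s ∈ l ∧ Ed.mt j ∈ l ∧ ∃ σ, Ed.pe j s σ ∈ l) ∧ (tg j).isSome

section Classify

variable {en : J → Bool → B} {tg : J → Option M} {v : Vx B J M n}

/-- A path that has come from `mid j` to `port j s` ends at the next vertex. -/
theorem finish_port {j : J} {s : Bool} (q : Walk (netEnds n en tg) (.port j s) v)
    (hv : v ∈ netT B J M n) (hn : q.support.Nodup)
    (h : ∀ w ∈ q.support.dropLast, w ∉ netT B J M n) (hm : Vx.mid j ∉ q.support) :
    ∃ σ, v = .term (en j s) σ ∧ Ed.pe j s σ ∈ q.edges := by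
  obtain ⟨w, e, q', he, hE, hS, -, -, hq⟩ := q.exists_step (by simp) hv hn h
  rcases ends_port he with ⟨σ, rfl, rfl⟩ | ⟨rfl, rfl⟩
  · have := q'.eq_of_mem (by simp) hq
    subst this
    exact ⟨σ, rfl, by simp [hE]⟩
  · exact absurd (by rw [hS]; exact List.mem_cons_of_mem _ q'.start_mem_support) hm

/-- A path that has reached `mid j` leaves it through a port or towards a top. -/
theorem finish_mid {j : J} (q : Walk (netEnds n en tg) (.mid j) v)
    (hv : v ∈ netT B J M n) (hn : q.support.Nodup)
    (h : ∀ w ∈ q.support.dropLast, w ∉ netT B J M n) :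
    (∃ s σ, v = .term (en j s) σ ∧ Ed.pe j s σ ∈ q.edges ∧ Ed.ms j s ∈ q.edges ∧
      Vx.port j s ∈ q.support) ∨
    (∃ m, tg j = some m ∧ v = .top m ∧ Ed.mt j ∈ q.edges) := by
  obtain ⟨w, e, q', he, hE, hS, hm, hn', hq⟩ := q.exists_step (by simp) hv hn h
  rcases ends_mid he with ⟨s, rfl, rfl⟩ | ⟨rfl, hw⟩
  · obtain ⟨σ, h1, h2⟩ := finish_port q' hv hn' hq hm
    refine Or.inl ⟨s, σ, h1, ?_, ?_, ?_⟩
    · rw [hE]; exact List.mem_cons_of_mem _ h2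
    · simp [hE]
    · rw [hS]; exact List.mem_cons_of_mem _ q'.start_mem_support
  · right
    cases ht : tg j with
    | none =>
      -- the vertex `dum j` is a dead end
      rw [ht, Option.elim] at hw
      subst hw
      obtain ⟨w, e, q'', he', -, hS', -⟩ := q'.exists_step (by simp) hv hn' hq
      have hw := ends_dum he'
      subst hw
      exact absurd (by rw [hS']; exact List.mem_cons_of_mem _ q''.start_mem_support) hm
    | some m =>
      rw [ht, Option.elim] at hw
      subst hw
      have := q'.eq_of_mem (by simp) hq
      exact ⟨m, rfl, this.symm, by simp [hE]⟩

/-- Every `T`-path of a network is of one of the kinds listed in `Use`. -/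
theorem exists_fits {u v : Vx B J M n} (p : Walk (netEnds n en tg) u v)
    (hp : IsTPath (netEnds n en tg) (netT B J M n) p) :
    ∃ x, Fits en tg x u v p.edges := by
  obtain ⟨hu, hv, hn, hne, hin⟩ := hp
  cases p with
  | nil => exact absurd rfl hne
  | @cons _ w _ e he q =>
    rw [Walk.support, List.nodup_cons] at hn
    rw [Walk.support, List.tail_cons] at hin
    obtain ⟨hu', hn⟩ := hn
    rcases hu with ⟨b, σ, rfl⟩ | ⟨m, rfl⟩
    · obtain ⟨j, s, rfl, rfl, rfl⟩ := ends_term he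
      obtain ⟨w, e, q', he', hE, hS, hpt, hn', hq⟩ := q.exists_step (by simp) hv hn hin
      rcases ends_port he' with ⟨τ, rfl, rfl⟩ | ⟨rfl, rfl⟩
      · have := q'.eq_of_mem (by simp) hq
        subst this
        have hτ : τ ≠ σ := by
          rintro rfl
          exact hu' (by rw [hS]; exact List.mem_cons_of_mem _ q'.start_mem_support)
        refine ⟨.N j s, ?_, ⟨σ, rfl⟩, ⟨τ, rfl⟩⟩
        intro ρ
        simp only [Walk.edges, hE, List.mem_cons, Ed.pe.injEq, true_and]
        cases ρ <;> cases σ <;> cases τ <;> simp at hτ ⊢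
      · rcases finish_mid q' hv hn' hq with ⟨s', τ, rfl, h1, h2, h3⟩ | ⟨m, hm, rfl, h1⟩
        · have hs : s' = !s := by
            cases s <;> cases s' <;> simp_all
          subst hs
          refine ⟨.C j, ?_, s, ⟨σ, rfl⟩, τ, rfl⟩
          intro ρ
          simp only [Walk.edges, hE, List.mem_cons]
          by_cases hρ : ρ = s
          · subst hρ
            exact ⟨by simp, σ, by simp⟩
          · have : ρ = !s := by cases ρ <;> cases s <;> simp at hρ ⊢
            subst this
            exact ⟨Or.inr (Or.inr h2), τ, Or.inr (Or.inr h1)⟩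
        · refine ⟨.R j s, ⟨?_, ?_, σ, ?_⟩, by simp [hm]⟩ <;>
            simp [Walk.edges, hE, h1]
    · obtain ⟨j, rfl, hj, rfl⟩ := ends_top he
      rcases finish_mid q hv hn hin with ⟨s', τ, rfl, h1, h2, h3⟩ | ⟨m', hm, rfl, h1⟩
      · refine ⟨.R j s', ⟨?_, ?_, τ, ?_⟩, by simp [hj]⟩ <;> simp [Walk.edges, h1, h2]
      · rw [hj] at hm
        cases hm
        exact absurd (Walk.end_mem_support q) hu'

end Classify

/-- Edge-disjoint `T`-paths do not share a port: a path through a port uses two of its three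
edges. -/
theorem port_unique {en : J → Bool → B} {tg : J → Option M} {u v u' v' : Vx B J M n}
    {l l' : List (Ed J)} {x x' : Use J} {j : J} {s : Bool}
    (h : Fits en tg x u v l) (h' : Fits en tg x' u' v' l')
    (hx : x = .N j s ∨ x = .C j ∨ x = .R j s) (hx' : x' = .N j s ∨ x' = .C j ∨ x' = .R j s)
    (hd : ∀ e ∈ l, e ∉ l') : False := by
  have key : ∀ {x : Use J} {u v : Vx B J M n} {l : List (Ed J)},
      Fits en tg x u v l → (x = .N j s ∨ x = .C j ∨ x = .R j s) →
      (Ed.pe j s true ∈ l ∧ Ed.pe j s false ∈ l) ∨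
      (Ed.ms j s ∈ l ∧ (Ed.pe j s true ∈ l ∨ Ed.pe j s false ∈ l)) := by
    rintro x u v l h (rfl | rfl | rfl)
    · exact Or.inl ⟨h.1 _, h.1 _⟩
    · obtain ⟨h1, σ, h2⟩ := h.1 s
      cases σ <;> tauto
    · obtain ⟨h1, -, σ, h2⟩ := h.1
      cases σ <;> tauto
  have h1 := key h hx
  have h2 := key h' hx'
  have a := hd (.pe j s true)
  have b := hd (.pe j s false)
  have c := hd (.ms j s)
  tauto

/-- Edge-disjoint `T`-paths do not share a middle vertex of a link. -/
theorem mid_unique {en : J → Bool → B} {tg : J → Option M} {u v u' v' : Vx B J M n}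
    {l l' : List (Ed J)} {x x' : Use J} {j : J}
    (h : Fits en tg x u v l) (h' : Fits en tg x' u' v' l')
    (hx : x = .C j ∨ x = .R j true ∨ x = .R j false)
    (hx' : x' = .C j ∨ x' = .R j true ∨ x' = .R j false)
    (hd : ∀ e ∈ l, e ∉ l') : False := by
  have key : ∀ {x : Use J} {u v : Vx B J M n} {l : List (Ed J)},
      Fits en tg x u v l → (x = .C j ∨ x = .R j true ∨ x = .R j false) →
      (Ed.ms j true ∈ l ∧ Ed.ms j false ∈ l) ∨
      (Ed.mt j ∈ l ∧ (Ed.ms j true ∈ l ∨ Ed.ms j false ∈ l)) := by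
    rintro x u v l h (rfl | rfl | rfl)
    · exact Or.inl ⟨(h.1 _).1, (h.1 _).1⟩
    · obtain ⟨⟨h1, h2, -⟩, -⟩ := h
      tauto
    · obtain ⟨⟨h1, h2, -⟩, -⟩ := h
      tauto
  have h1 := key h hx
  have h2 := key h' hx'
  have a := hd (.ms j true)
  have b := hd (.ms j false)
  have c := hd (.mt j)
  tauto

/-! ### The profile of a family of connectors -/

/-- The link that a path of kind `x` uses. -/
def Use.link : Use J → J
  | .N j _ => j
  | .C j => j
  | .R j _ => j

/-- A count of paths, sorted by their kinds. -/
theorem card_filter_use {I : Type} [DecidableEq J] [Fintype J] (G : Finset I) (x : I → Use J)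
    (P : Use J → Prop) [DecidablePred P] :
    (G.filter fun i => P (x i)).card = ∑ j,
      ((if P (.N j true) then (G.filter fun i => x i = .N j true).card else 0) +
        (if P (.N j false) then (G.filter fun i => x i = .N j false).card else 0) +
        (if P (.C j) then (G.filter fun i => x i = .C j).card else 0) +
        (if P (.R j true) then (G.filter fun i => x i = .R j true).card else 0) +
        (if P (.R j false) then (G.filter fun i => x i = .R j false).card else 0)) := by
  rw [Finset.card_eq_sum_card_fiberwise (f := fun i => (x i).link) (t := Finset.univ)
    (fun _ _ => Finset.mem_coe.2 (Finset.mem_univ _))]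
  refine Finset.sum_congr rfl fun j _ => ?_
  have key : ∀ c : Use J, (if P c then (G.filter fun i => x i = c).card else 0) =
      ∑ i ∈ G, if P (x i) ∧ x i = c then 1 else 0 := by
    intro c
    rw [Finset.card_filter]
    split_ifs with h
    · refine Finset.sum_congr rfl fun i _ => if_congr ?_ rfl rfl
      constructor
      · rintro h'; exact ⟨h' ▸ h, h'⟩
      · exact fun h' => h'.2
    · refine (Finset.sum_eq_zero fun i _ => if_neg ?_).symm
      rintro ⟨h1, h2⟩
      exact h (h2 ▸ h1)
  simp only [key, ← Finset.sum_add_distrib]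
  rw [Finset.filter_filter, Finset.card_filter]
  refine Finset.sum_congr rfl fun i _ => ?_
  by_cases hP : P (x i)
  · simp only [hP, true_and]
    rcases x i with ⟨j', _ | _⟩ | j' | ⟨j', _ | _⟩ <;>
      simp only [Use.link, Use.N.injEq, Use.C.injEq, Use.R.injEq, and_true, and_false,
        reduceCtorEq, if_false, add_zero, zero_add, Bool.true_eq_false, Bool.false_eq_true] <;>
      congr
  · simp [hP]

/-- If three kinds of paths exclude each other and themselves, at most one path is of one of these
kinds. -/
theorem card_three {I : Type} [DecidableEq J] (G : Finset I) (x : I → Use J) {u v w : Use J}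
    (huv : u ≠ v) (huw : u ≠ w) (hvw : v ≠ w)
    (h : ∀ i i', (x i = u ∨ x i = v ∨ x i = w) → (x i' = u ∨ x i' = v ∨ x i' = w) → i = i') :
    (G.filter fun i => x i = u).card + (G.filter fun i => x i = v).card +
      (G.filter fun i => x i = w).card ≤ 1 := by
  have h1 : (G.filter fun i => x i ∈ ({u, v, w} : Finset (Use J))).card ≤ 1 := by
    rw [Finset.card_le_one]
    intro i hi i' hi'
    simp only [Finset.mem_filter, Finset.mem_insert, Finset.mem_singleton] at hi hi'
    exact h i i' hi.2 hi'.2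
  refine le_trans (le_of_eq ?_) h1
  rw [Finset.card_filter, Finset.card_filter, Finset.card_filter, Finset.card_filter,
    ← Finset.sum_add_distrib, ← Finset.sum_add_distrib]
  refine Finset.sum_congr rfl fun i _ => ?_
  simp only [Finset.mem_insert, Finset.mem_singleton]
  by_cases h1 : x i = u
  · simp [h1, huv, huw]
  · by_cases h2 : x i = v
    · simp [h2, huv.symm, hvw]
    · simp [h1, h2]

/-- The numbers `nn j s`, `cc j` and `rr j s` of paths of the kinds `N j s`, `C j` and `R j s` in
spanning trees of `k` disjoint connectors of a network. The first two bounds hold since such paths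
share neither ports nor middles; the equation counts the edges of the trees, and the last bound
counts those between the terminals of the blobs in `X`. -/
theorem exists_profile [Fintype B] [Nonempty B] [Fintype J] [Fintype M] [DecidableEq B]
    {en : J → Bool → B} {tg : J → Option M} {k : ℕ} (Q : Fin k → Set (Ed J))
    (hQ : ∀ i, IsConnector (netEnds n en tg) (netT B J M n) (Q i))
    (hd : Pairwise fun i j => Disjoint (Q i) (Q j)) :
    ∃ (nn : J → Bool → ℕ) (cc : J → ℕ) (rr : J → Bool → ℕ),
      (∀ j s, nn j s + cc j + rr j s ≤ 1) ∧
      (∀ j, cc j + rr j true + rr j false ≤ 1) ∧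
      (∀ j s, tg j = none → rr j s = 0) ∧
      (∑ j, (nn j true + nn j false + cc j + rr j true + rr j false)) + k =
        k * (2 * Fintype.card B + Fintype.card M) ∧
      ∀ X : Finset B, X.Nonempty →
        (∑ j, ((if en j true ∈ X then nn j true else 0) +
          (if en j false ∈ X then nn j false else 0) +
          (if en j true ∈ X ∧ en j false ∈ X then cc j else 0))) + k ≤ 2 * k * X.card := by
  classical
  have : Fintype (Vx B J M n) := Fintype.ofFinite _
  choose m a b p hp hpd hC hconn using hQ
  choose x hx using fun c i => exists_fits (p c i) (hp c i)
  have hT : (netT B J M n).toFinset.Nonempty :=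
    ⟨.term (Classical.arbitrary B) true, by simp⟩
  have hTcard : (netT B J M n).toFinset.card = 2 * Fintype.card B + Fintype.card M := by
    rw [Set.toFinset_card, ← Nat.card_eq_fintype_card]
    have e : netT B J M n ≃ (B × Bool) ⊕ M := by
      refine (Equiv.ofBijective (fun z : (B × Bool) ⊕ M => (⟨z.elim (fun q => .term q.1 q.2) .top,
        by cases z <;> simp⟩ : netT B J M n)) ⟨?_, ?_⟩).symm
      · rintro (⟨b, σ⟩ | m) (⟨b', σ'⟩ | m') h <;> simp at h ⊢ <;> exact h
      · rintro ⟨_, ⟨b, σ, rfl⟩ | ⟨m, rfl⟩⟩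
        · exact ⟨.inl (b, σ), rfl⟩
        · exact ⟨.inr m, rfl⟩
    rw [Nat.card_congr e, Nat.card_eq_fintype_card, Fintype.card_sum, Fintype.card_prod,
      Fintype.card_bool, mul_comm]
  choose F hF1 hF2 using fun c => exists_tree (netT B J M n).toFinset hT (a c) (b c)
    (fun i => by simpa using (hp c i).1) (fun i => by simpa using (hp c i).2.1)
    (fun t₁ h₁ t₂ h₂ => hconn c t₁ (by simpa using h₁) t₂ (by simpa using h₂))
  let G : Finset (Σ c, Fin (m c)) := Finset.univ.sigma F
  let y : (Σ c, Fin (m c)) → Use J := fun i => x i.1 i.2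
  have hdis : ∀ i i' : (Σ c, Fin (m c)), i ≠ i' →
      ∀ e ∈ (p i.1 i.2).edges, e ∉ (p i'.1 i'.2).edges := by
    rintro ⟨c, i⟩ ⟨c', i'⟩ hne e he he'
    by_cases hc : c = c'
    · subst hc
      exact hpd c i i' (fun h => hne (by rw [h])) e he he'
    · have hcc : Disjoint (Q c) (Q c') := hd hc
      refine Set.disjoint_left.1 hcc (?_ : e ∈ Q c) (?_ : e ∈ Q c')
      · rw [hC]; exact ⟨i, he⟩
      · rw [hC]; exact ⟨i', he'⟩
  refine ⟨fun j s => (G.filter fun i => y i = .N j s).card,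
    fun j => (G.filter fun i => y i = .C j).card,
    fun j s => (G.filter fun i => y i = .R j s).card, ?_, ?_, ?_, ?_, ?_⟩
  · intro j s
    refine card_three G y (by simp) (by simp) (by simp) fun i i' hi hi' => ?_
    by_contra hne
    exact port_unique (hx i.1 i.2) (hx i'.1 i'.2) hi hi' (hdis i i' hne)
  · intro j
    refine card_three G y (by simp) (by simp) (by simp) fun i i' hi hi' => ?_
    by_contra hne
    exact mid_unique (hx i.1 i.2) (hx i'.1 i'.2) hi hi' (hdis i i' hne)
  · intro j s hj
    rw [Finset.card_eq_zero, Finset.filter_eq_empty_iff]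
    intro i _ hi
    have := hx i.1 i.2
    rw [show x i.1 i.2 = .R j s from hi] at this
    simpa [hj] using this.2
  · have := card_filter_use G y (fun _ => True)
    simp only [if_true, Finset.filter_true] at this
    rw [← this]
    have h2 : ∑ c : Fin k, ((F c).card + 1) = ∑ c : Fin k, (2 * Fintype.card B + Fintype.card M) :=
      Finset.sum_congr rfl fun c _ => by rw [hF1, hTcard]
    rw [Finset.card_sigma]
    simpa [Finset.sum_add_distrib] using h2
  · intro X hX
    let W : Finset (Vx B J M n) :=
      (X ×ˢ Finset.univ).image fun q : B × Bool => Vx.term q.1 q.2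
    have hmem : ∀ b σ, Vx.term b σ ∈ W ↔ b ∈ X := by
      intro b σ
      simp [W]
    have hW : W.Nonempty := by
      obtain ⟨b, hb⟩ := hX
      exact ⟨.term b true, (hmem _ _).2 hb⟩
    have hWcard : W.card = 2 * X.card := by
      rw [Finset.card_image_of_injective]
      · rw [Finset.card_product, Finset.card_univ, Fintype.card_bool, mul_comm]
      · rintro ⟨b, σ⟩ ⟨b', σ'⟩ h
        simpa using h
    -- the paths that stay inside `X`
    let P : Use J → Prop := fun u => match u with
      | .N j s => en j s ∈ X
      | .C j => en j true ∈ X ∧ en j false ∈ X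
      | .R _ _ => False
    have h1 := card_filter_use G y P
    have h2 : G.filter (fun i => P (y i)) ⊆
        Finset.univ.sigma fun c => (F c).filter fun i => a c i ∈ W ∧ b c i ∈ W := by
      rintro ⟨c, i⟩ hi
      rw [Finset.mem_filter] at hi
      obtain ⟨hiG, hi⟩ := hi
      rw [Finset.mem_sigma] at hiG ⊢
      refine ⟨hiG.1, Finset.mem_filter.2 ⟨hiG.2, ?_⟩⟩
      have hf := hx c i
      change P (x c i) at hi
      cases hxc : x c i with
      | N j s =>
        rw [hxc] at hf hi
        obtain ⟨-, ⟨σ, hu⟩, τ, hv⟩ := hf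
        rw [hu, hv, hmem, hmem]
        exact ⟨hi, hi⟩
      | C j =>
        rw [hxc] at hf hi
        obtain ⟨-, s, ⟨σ, hu⟩, τ, hv⟩ := hf
        rw [hu, hv, hmem, hmem]
        obtain ⟨hi1, hi2⟩ := hi
        cases s
        · exact ⟨hi2, hi1⟩
        · exact ⟨hi1, hi2⟩
      | R j s =>
        rw [hxc] at hi
        exact hi.elim
    have h3 := Finset.card_le_card h2
    rw [Finset.card_sigma] at h3
    have h4 : ∑ c : Fin k, (((F c).filter fun i => a c i ∈ W ∧ b c i ∈ W).card + 1) ≤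
        ∑ c : Fin k, W.card := Finset.sum_le_sum fun c _ => hF2 c W hW
    simp only [Finset.sum_add_distrib, Finset.sum_const, Finset.card_univ, Fintype.card_fin,
      smul_eq_mul, mul_one, hWcard] at h4
    have h5 : k * (2 * X.card) = 2 * k * X.card := by ring
    have h6 : (G.filter fun i => P (y i)).card = ∑ j,
        ((if en j true ∈ X then (G.filter fun i => y i = .N j true).card else 0) +
          (if en j false ∈ X then (G.filter fun i => y i = .N j false).card else 0) +
          (if en j true ∈ X ∧ en j false ∈ X then
            (G.filter fun i => y i = .C j).card else 0)) := by
      rw [h1]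
      refine Finset.sum_congr rfl fun j _ => ?_
      simp only [P, if_false, add_zero]
      congr
    dsimp only
    omega

/-! ### Edge-connectivity of networks -/

/-- The link that an edge of a network belongs to. -/
def Ed.link : Ed J → J
  | .pe j _ _ => j
  | .ms j _ => j
  | .mt j => j

/-- A network is `d`-edge-connected between its terminals if, after the deletion of fewer than `d`
links, the remaining ones still connect all blobs and still reach every top. Deleting an edge is
no worse than deleting the link it belongs to. -/
theorem edgeConnectedIn_net [Nontrivial B] {en : J → Bool → B} {tg : J → Option M} {d : ℕ}
    (h1 : ∀ S : Finset J, S.card < d → ∀ b b', Relation.ReflTransGen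
      (fun x y => ∃ j, j ∉ S ∧ ∃ s, en j s = x ∧ en j (!s) = y) b b')
    (h2 : ∀ S : Finset J, S.card < d → ∀ m, ∃ j, j ∉ S ∧ tg j = some m) :
    EdgeConnectedIn (netEnds n en tg) (netT B J M n) d := by
  classical
  intro S hS
  have hS' : (S.image Ed.link).card < d := lt_of_le_of_lt Finset.card_image_le hS
  have hclean : ∀ e : Ed J, e.link ∉ S.image Ed.link → e ∉ S :=
    fun e he h => he (Finset.mem_image_of_mem _ h)
  let r : Vx B J M n → Vx B J M n → Prop :=
    fun a b => ∃ e, e ∉ S ∧ netEnds n en tg e = s(a, b)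
  have hsymm : ∀ {x y}, Relation.ReflTransGen r x y → Relation.ReflTransGen r y x := by
    intro x y h
    induction h with
    | refl => exact .refl
    | tail _ hstep ih =>
      obtain ⟨e, he, hab⟩ := hstep
      exact .head ⟨e, he, hab.trans Sym2.eq_swap⟩ ih
  have hport : ∀ j, j ∉ S.image Ed.link → ∀ s σ,
      Relation.ReflTransGen r (.port j s) (.term (en j s) σ) :=
    fun j hj s σ => .single ⟨.pe j s σ, hclean _ hj, rfl⟩
  have hmid : ∀ j, j ∉ S.image Ed.link → ∀ s,
      Relation.ReflTransGen r (.mid j) (.port j s) :=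
    fun j hj s => .single ⟨.ms j s, hclean _ hj, rfl⟩
  -- the two terminals of a blob
  have hblob : ∀ b σ τ, Relation.ReflTransGen r (.term b σ) (.term b τ) := by
    intro b σ τ
    obtain ⟨b', hb⟩ := exists_ne b
    rcases (h1 _ hS' b b').cases_head with h | ⟨c, ⟨j, hj, s, rfl, -⟩, -⟩
    · exact absurd h.symm hb
    · exact (hsymm (hport j hj s σ)).trans (hport j hj s τ)
  have hterm : ∀ b b' σ τ, Relation.ReflTransGen r (.term b σ) (.term b' τ) := by
    intro b b' σ τ
    refine Relation.ReflTransGen.trans ?_ (hblob b' σ τ)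
    have h := h1 _ hS' b b'
    induction h with
    | refl => exact .refl
    | tail _ hstep ih =>
      obtain ⟨j, hj, s, rfl, rfl⟩ := hstep
      exact ih.trans ((hsymm (hport j hj s σ)).trans ((hsymm (hmid j hj s)).trans
        ((hmid j hj (!s)).trans (hport j hj (!s) σ))))
  have htop : ∀ m, ∃ b, Relation.ReflTransGen r (.top m) (.term b true) := by
    intro m
    obtain ⟨j, hj, ht⟩ := h2 _ hS' m
    refine ⟨en j true, ?_⟩
    have : Relation.ReflTransGen r (.mid j) (.top m) :=
      .single ⟨.mt j, hclean _ hj, by simp [netEnds, ht]⟩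
    exact (hsymm this).trans ((hmid j hj true).trans (hport j hj true true))
  have hall : ∀ t ∈ netT B J M n, ∃ b, Relation.ReflTransGen r t (.term b true) := by
    rintro t (⟨b, σ, rfl⟩ | ⟨m, rfl⟩)
    · exact ⟨b, hblob b σ true⟩
    · exact htop m
  intro t₁ ht₁ t₂ ht₂
  obtain ⟨b₁, hb₁⟩ := hall t₁ ht₁
  obtain ⟨b₂, hb₂⟩ := hall t₂ ht₂
  exact exists_walk_of_reflTransGen
    (hb₁.trans ((hterm b₁ b₂ true true).trans (hsymm hb₂)))

/-! ### Rings of blobs: the case of even `k` -/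

/-- The successor permutation of the ring `I × Fin 3` made of consecutive triples of blobs,
the triple of `i` being followed by that of `σ i`. -/
def nxt {I : Type} (σ : Equiv.Perm I) : Equiv.Perm (I × Fin 3) where
  toFun b := if b.2 = 2 then (σ b.1, 0) else (b.1, b.2 + 1)
  invFun b := if b.2 = 0 then (σ.symm b.1, 2) else (b.1, b.2 - 1)
  left_inv := by rintro ⟨i, c⟩; fin_cases c <;> simp
  right_inv := by rintro ⟨i, c⟩; fin_cases c <;> simp

/-- In a ring every blob `b` is joined to its successor by `h` parallel links `(b, r)`. -/
def ringEn {I : Type} (σ : Equiv.Perm I) {h : ℕ} (j : (I × Fin 3) × Fin h) : Bool → I × Fin 3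
  | true => j.1
  | false => nxt σ j.1

/-- The local estimates around each triple of a ring add up: the surplus `b` of paths to the tops
is paid for by the deficits `n` (of paths within blobs) and `l` (of paths between
consecutive blobs). -/
theorem ring_sum {I : Type} [Fintype I] (σ : Equiv.Perm I) (n0 n1 n2 l0 l1 l2 b0 b1 : I → ℤ)
    (hn : ∀ i, 0 ≤ n2 i) (h0 : ∀ i, b0 (σ i) ≤ n0 (σ i) + l0 (σ i) + l2 i)
    (h1 : ∀ i, b1 i ≤ n1 i + l1 i + l0 i) (hb : ∀ i, b0 i + b1 i ≤ 1)
    (h2 : ∀ i, 0 ≤ n2 i + n0 (σ i) + l2 i) (h3 : ∀ i, 0 ≤ n1 i + n2 i + l1 i)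
    (h4 : ∀ i, 0 ≤ n1 i + n2 i + n0 (σ i) + l1 i + l2 i) :
    ∑ i, (b0 i + b1 i) ≤ ∑ i, (n0 i + n1 i + n2 i) + ∑ i, (l0 i + l1 i + l2 i) := by
  have e1 : ∑ i, (b0 (σ i) + b1 (σ i)) = ∑ i, (b0 i + b1 i) :=
    Equiv.sum_comp σ fun i => b0 i + b1 i
  have e2 : ∑ i, n0 (σ i) = ∑ i, n0 i := Equiv.sum_comp σ n0
  have e3 : ∑ i, l0 (σ i) = ∑ i, l0 i := Equiv.sum_comp σ l0
  have e4 : ∑ i, max (l1 (σ i) + n1 (σ i)) 0 = ∑ i, max (l1 i + n1 i) 0 :=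
    Equiv.sum_comp σ fun i => max (l1 i + n1 i) 0
  have s1 : ∑ i, (b0 (σ i) + b1 (σ i)) ≤
      ∑ i, (max (l2 i + n0 (σ i)) 0 + max (l1 (σ i) + n1 (σ i)) 0 + l0 (σ i)) := by
    refine Finset.sum_le_sum fun i _ => ?_
    have := h0 i; have := h1 (σ i); have := hb (σ i)
    omega
  have s2 : ∑ i, (max (l1 i + n1 i) 0 + max (l2 i + n0 (σ i)) 0) ≤
      ∑ i, (n1 i + n2 i + n0 (σ i) + l1 i + l2 i) := by
    refine Finset.sum_le_sum fun i _ => ?_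
    have := hn i; have := h2 i; have := h3 i; have := h4 i
    omega
  simp only [Finset.sum_add_distrib] at *
  linarith

/-- A ring with at most one link per triple leading to one of two tops has no profile. -/
theorem ring_false {I M : Type} [Fintype I] [DecidableEq I] [Fintype M] (σ : Equiv.Perm I)
    {k h : ℕ} (hk : 0 < k) (hh : 2 * h = 3 * k) (hM : Fintype.card M = 2) (r₀ : Fin h)
    (tg : (I × Fin 3) × Fin h → Option M)
    (htg : ∀ i c r, tg ((i, c), r) ≠ none → c = 0 ∧ r = r₀)
    (nn : (I × Fin 3) × Fin h → Bool → ℕ) (cc : (I × Fin 3) × Fin h → ℕ)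
    (rr : (I × Fin 3) × Fin h → Bool → ℕ)
    (p1 : ∀ j s, nn j s + cc j + rr j s ≤ 1)
    (p2 : ∀ j, cc j + rr j true + rr j false ≤ 1)
    (p3 : ∀ j s, tg j = none → rr j s = 0)
    (p4 : (∑ j, (nn j true + nn j false + cc j + rr j true + rr j false)) + k =
        k * (2 * Fintype.card (I × Fin 3) + Fintype.card M))
    (p5 : ∀ X : Finset (I × Fin 3), X.Nonempty →
        (∑ j, ((if ringEn σ j true ∈ X then nn j true else 0) +
          (if ringEn σ j false ∈ X then nn j false else 0) +
          (if ringEn σ j true ∈ X ∧ ringEn σ j false ∈ X then cc j else 0))) + k ≤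
            2 * k * X.card) : False := by
  -- the numbers of paths within a blob, across the bundle that leaves it, and, for the link of the
  -- triple `i` that leads to a top, to this top from the two ends of the link
  let ν : I × Fin 3 → ℕ := fun b => ∑ r, nn (b, r) true + ∑ r, nn ((nxt σ).symm b, r) false
  let L : I × Fin 3 → ℕ := fun b => ∑ r, cc (b, r)
  let b0 : I → ℕ := fun i => ∑ r, rr ((i, 0), r) true
  let b1 : I → ℕ := fun i => ∑ r, rr ((i, 0), r) false
  have hrr : ∀ i c r s, (c = 0 → r ≠ r₀) → rr ((i, c), r) s = 0 := by
    intro i c r s hcr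
    apply p3
    by_contra hne
    obtain ⟨h1, h2⟩ := htg i c r hne
    exact hcr h1 h2
  have F1 : ∀ b, ν b + L b + L ((nxt σ).symm b) + ∑ r, rr (b, r) true +
      ∑ r, rr ((nxt σ).symm b, r) false ≤ 3 * k := by
    intro b
    have a1 : ∑ r : Fin h, (nn (b, r) true + cc (b, r) + rr (b, r) true) ≤ ∑ r : Fin h, 1 :=
      Finset.sum_le_sum fun r _ => p1 _ _
    have a2 : ∑ r : Fin h, (nn ((nxt σ).symm b, r) false + cc ((nxt σ).symm b, r) +
        rr ((nxt σ).symm b, r) false) ≤ ∑ r : Fin h, 1 :=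
      Finset.sum_le_sum fun r _ => p1 _ _
    simp only [Finset.sum_add_distrib, Finset.sum_const, Finset.card_univ, Fintype.card_fin,
      smul_eq_mul, mul_one] at a1 a2
    simp only [ν, L]
    omega
  have F2 : ∀ i, b0 i + b1 i ≤ 1 := by
    intro i
    simp only [b0, b1]
    rw [Finset.sum_eq_single r₀ (fun r _ hr => hrr _ _ _ _ fun _ => hr) (by simp),
      Finset.sum_eq_single r₀ (fun r _ hr => hrr _ _ _ _ fun _ => hr) (by simp)]
    have := p2 ((i, 0), r₀)
    omega
  have F3 : ∀ X : Finset (I × Fin 3), X.Nonempty →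
      ∑ b ∈ X, ν b + ∑ b ∈ X with nxt σ b ∈ X, L b + k ≤ 2 * k * X.card := by
    intro X hX
    refine le_trans (le_of_eq ?_) (p5 X hX)
    have hite : ∀ (P : I × Fin 3 → Prop) [DecidablePred P] (g : I × Fin 3 → Fin h → ℕ),
        (∑ b, ∑ r, if P b then g b r else 0) = ∑ b with P b, ∑ r, g b r := by
      intro P _ g
      rw [Finset.sum_filter]
      refine Finset.sum_congr rfl fun b _ => ?_
      split_ifs <;> simp
    have e0 : (∑ j, ((if ringEn σ j true ∈ X then nn j true else 0) +
          (if ringEn σ j false ∈ X then nn j false else 0) +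
          (if ringEn σ j true ∈ X ∧ ringEn σ j false ∈ X then cc j else 0))) =
        ∑ b, ∑ r, ((if b ∈ X then nn (b, r) true else 0) +
          (if nxt σ b ∈ X then nn (b, r) false else 0) +
          (if b ∈ X ∧ nxt σ b ∈ X then cc (b, r) else 0)) := Fintype.sum_prod_type _
    rw [e0]
    simp only [Finset.sum_add_distrib, ν, L]
    rw [hite (fun b => b ∈ X), hite (fun b => nxt σ b ∈ X), hite (fun b => b ∈ X ∧ nxt σ b ∈ X),
      Finset.filter_univ_mem]
    have e1 : ∑ b with nxt σ b ∈ X, ∑ r, nn (b, r) false =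
        ∑ b ∈ X, ∑ r, nn ((nxt σ).symm b, r) false := by
      have := Equiv.sum_comp (nxt σ)
        fun b => if b ∈ X then ∑ r, nn ((nxt σ).symm b, r) false else 0
      simp only [Equiv.symm_apply_apply] at this
      rw [Finset.sum_filter, this, ← Finset.sum_filter, Finset.filter_univ_mem]
    have e2 : (Finset.univ.filter fun b => b ∈ X ∧ nxt σ b ∈ X) =
        X.filter fun b => nxt σ b ∈ X := by
      ext b
      simp
    rw [e1, e2]
  have F4 : ∑ b, ν b + ∑ b, L b + ∑ i, (b0 i + b1 i) + k = k * (6 * Fintype.card I + 2) := by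
    have e1 : ∑ b, ∑ r, nn ((nxt σ).symm b, r) false = ∑ b, ∑ r, nn (b, r) false :=
      Equiv.sum_comp (nxt σ).symm fun b => ∑ r, nn (b, r) false
    have e2 : ∀ s, ∑ b, ∑ r, rr (b, r) s = ∑ i, ∑ r, rr ((i, 0), r) s := by
      intro s
      rw [Fintype.sum_prod_type]
      refine Finset.sum_congr rfl fun i _ => ?_
      rw [Fin.sum_univ_three, Finset.sum_eq_zero (s := Finset.univ) (f := fun r => rr ((i, 1), r) s)
          fun r _ => hrr _ _ _ _ (by simp),
        Finset.sum_eq_zero (s := Finset.univ) (f := fun r => rr ((i, 2), r) s)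
          fun r _ => hrr _ _ _ _ (by simp)]
      rfl
    rw [Fintype.sum_prod_type, hM, Fintype.card_prod, Fintype.card_fin] at p4
    simp only [Finset.sum_add_distrib, ν, L, b0, b1] at p4 ⊢
    rw [e2, e2] at p4
    rw [e1]
    have e3 : k * (2 * (Fintype.card I * 3) + 2) = k * (6 * Fintype.card I + 2) := by ring
    omega
  have F31 : ∀ b, ν b ≤ k := by
    intro b
    have := F3 {b} (Finset.singleton_nonempty b)
    simp only [Finset.sum_singleton, Finset.card_singleton] at this
    omega
  have F32 : ∀ b, b ≠ nxt σ b → ν b + ν (nxt σ b) + L b ≤ 3 * k := by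
    intro b hb
    have := F3 {b, nxt σ b} (Finset.insert_nonempty _ _)
    rw [Finset.sum_pair hb, Finset.card_pair hb] at this
    have h2 : L b ≤ ∑ b' ∈ ({b, nxt σ b} : Finset _) with
        nxt σ b' ∈ ({b, nxt σ b} : Finset _), L b' :=
      Finset.single_le_sum (f := L) (fun _ _ => Nat.zero_le _) (by simp)
    omega
  have F33 : ∀ i, ν (i, 1) + ν (i, 2) + ν (σ i, 0) + L (i, 1) + L (i, 2) ≤ 5 * k := by
    intro i
    have := F3 {(i, 1), (i, 2), (σ i, 0)} (Finset.insert_nonempty _ _)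
    rw [Finset.sum_insert (by simp), Finset.sum_pair (by simp),
      Finset.card_insert_of_notMem (by simp), Finset.card_pair (by simp)] at this
    have h2 : ∑ b' ∈ {((i, 1) : I × Fin 3), (i, 2)}, L b' ≤
        ∑ b' ∈ ({(i, 1), (i, 2), (σ i, 0)} : Finset (I × Fin 3)) with
          nxt σ b' ∈ ({(i, 1), (i, 2), (σ i, 0)} : Finset (I × Fin 3)), L b' := by
      refine Finset.sum_le_sum_of_subset ?_
      intro b hb
      simp only [Finset.mem_insert, Finset.mem_singleton] at hb
      rcases hb with rfl | rfl <;> simp [nxt]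
    rw [Finset.sum_pair (by simp)] at h2
    omega
  have hsum : ∀ f : I × Fin 3 → ℕ, ∑ b, f b = ∑ i, (f (i, 0) + f (i, 1) + f (i, 2)) := by
    intro f
    rw [Fintype.sum_prod_type]
    exact Finset.sum_congr rfl fun i _ => Fin.sum_univ_three _
  have key := ring_sum σ (fun i => k - ν (i, 0)) (fun i => k - ν (i, 1)) (fun i => k - ν (i, 2))
    (fun i => k - L (i, 0)) (fun i => k - L (i, 1)) (fun i => k - L (i, 2))
    (fun i => b0 i) (fun i => b1 i) ?_ ?_ ?_ ?_ ?_ ?_ ?_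
  · rw [hsum, hsum] at F4
    zify at F4
    simp only [Finset.sum_add_distrib, Finset.sum_sub_distrib, Finset.sum_const,
      Finset.card_univ, nsmul_eq_mul] at F4 key
    have : (0 : ℤ) < k := by exact_mod_cast hk
    linarith
  · intro i
    have := F31 (i, 2)
    omega
  · intro i
    have := F1 (σ i, 0)
    have e : (nxt σ).symm (σ i, 0) = (i, 2) := by simp [nxt]
    rw [e] at this
    simp only [b0]
    omega
  · intro i
    have := F1 (i, 1)
    have e : (nxt σ).symm (i, 1) = (i, 0) := by simp [nxt]
    rw [e] at this
    simp only [b1]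
    omega
  · intro i
    have := F2 i
    omega
  · intro i
    have := F32 (i, 2) (by simp [nxt])
    have e : nxt σ (i, 2) = (σ i, 0) := by simp [nxt]
    rw [e] at this
    omega
  · intro i
    have := F32 (i, 1) (by simp [nxt])
    have e : nxt σ (i, 1) = (i, 2) := by simp [nxt]
    rw [e] at this
    omega
  · intro i
    have := F33 i
    omega


/-- A set of blobs of the ring over `ZMod N` that is closed under successors contains all. -/
theorem ring_closed {N : ℕ} [NeZero N] (S : Set (ZMod N × Fin 3)) (hS : S.Nonempty)
    (hcl : ∀ b ∈ S, nxt (Equiv.addRight 1) b ∈ S) : ∀ b, b ∈ S := by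
  have h0 : ∀ i : ZMod N, (i, 0) ∈ S → (i, 1) ∈ S ∧ (i, 2) ∈ S ∧ (i + 1, 0) ∈ S := by
    intro i hi
    have a1 : (i, 1) ∈ S := by simpa [nxt] using hcl _ hi
    have a2 : (i, 2) ∈ S := by simpa [nxt] using hcl _ a1
    exact ⟨a1, a2, by simpa [nxt] using hcl _ a2⟩
  obtain ⟨i₀, hi₀⟩ : ∃ i, (i, 0) ∈ S := by
    obtain ⟨⟨i, c⟩, hb⟩ := hS
    have a1 := hcl _ hb
    have a2 := hcl _ a1
    fin_cases c
    · exact ⟨i, hb⟩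
    · exact ⟨i + 1, by simpa [nxt] using a2⟩
    · exact ⟨i + 1, by simpa [nxt] using a1⟩
  have h1 : ∀ t : ℕ, (i₀ + t, 0) ∈ S := by
    intro t
    induction t with
    | zero => simpa using hi₀
    | succ t ih => simpa [add_assoc] using (h0 _ ih).2.2
  have h2 : ∀ i, (i, 0) ∈ S := by
    intro i
    have := h1 (i - i₀).val
    rwa [ZMod.natCast_zmod_val, add_sub_cancel] at this
  rintro ⟨i, c⟩
  fin_cases c
  · exact h2 i
  · exact (h0 i (h2 i)).1
  · exact (h0 i (h2 i)).2.1

/-- Since two deleted bundles of `h` links would already account for `2 * h` links, deleting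
fewer links breaks the ring in at most one place. -/
theorem ring_reach {N h d : ℕ} [NeZero N] (hh : d ≤ 2 * h)
    (S : Finset ((ZMod N × Fin 3) × Fin h)) (hS : S.card < d) (b b' : ZMod N × Fin 3) :
    Relation.ReflTransGen (fun x y => ∃ j, j ∉ S ∧ ∃ s, ringEn (Equiv.addRight 1) j s = x ∧
      ringEn (Equiv.addRight 1) j (!s) = y) b b' := by
  set r : ZMod N × Fin 3 → ZMod N × Fin 3 → Prop := fun x y => ∃ j, j ∉ S ∧ ∃ s,
    ringEn (Equiv.addRight 1) j s = x ∧ ringEn (Equiv.addRight 1) j (!s) = y with hr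
  have hsymm : ∀ {x y}, Relation.ReflTransGen r x y → Relation.ReflTransGen r y x := by
    intro x y h
    induction h with
    | refl => exact .refl
    | tail _ hstep ih =>
      obtain ⟨j, hj, s, h1, h2⟩ := hstep
      exact .head ⟨j, hj, !s, h2, by rw [Bool.not_not]; exact h1⟩ ih
  have hbad : ∀ x y, (∀ i, (x, i) ∈ S) → (∀ i, (y, i) ∈ S) → x = y := by
    intro x y hx hy
    by_contra hne
    have hsub : ({x, y} : Finset _) ×ˢ (Finset.univ : Finset (Fin h)) ⊆ S := by
      rintro ⟨z, i⟩ hz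
      simp only [Finset.mem_product, Finset.mem_insert, Finset.mem_singleton] at hz
      rcases hz.1 with rfl | rfl
      · exact hx i
      · exact hy i
    have := Finset.card_le_card hsub
    rw [Finset.card_product, Finset.card_pair hne, Finset.card_univ, Fintype.card_fin] at this
    omega
  obtain ⟨g, hg⟩ : ∃ g, ∀ x, x ≠ g → ∃ i, (x, i) ∉ S := by
    by_cases hex : ∃ g, ∀ i, (g, i) ∈ S
    · obtain ⟨g, hg⟩ := hex
      refine ⟨g, fun x hx => ?_⟩
      by_contra! hcon
      exact hx (hbad x g hcon hg)
    · push Not at hex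
      exact ⟨b, fun x _ => hex x⟩
  -- walk around the ring, starting just after the break
  have hall : ∀ x, Relation.ReflTransGen r (nxt (Equiv.addRight 1) g) x := by
    refine ring_closed {x | Relation.ReflTransGen r (nxt (Equiv.addRight 1) g) x} ⟨_, .refl⟩ ?_
    intro x hx
    by_cases hxg : x = g
    · subst hxg
      exact .refl
    · obtain ⟨i, hi⟩ := hg x hxg
      exact Relation.ReflTransGen.tail hx ⟨(x, i), hi, true, rfl, rfl⟩
  exact (hsymm (hall b)).trans (hall b')

/-- The two tops of the ring of `6 * k` triples: the first link of the triple `i` leads to one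
of them or to the other, according to which half of the ring `i` lies in. -/
def ringTg (k h : ℕ) (j : (ZMod (6 * k) × Fin 3) × Fin h) : Option Bool :=
  if j.1.2 = 0 ∧ j.2.val = 0 then some (decide (j.1.1.val < 3 * k)) else none

theorem even_case {k h : ℕ} (hk : 0 < k) (hh : 2 * h = 3 * k) (n : ℕ) :
    ∃ (V E : Type) (_ : Fintype V) (_ : Fintype E) (ends : E → Sym2 V) (T : Set V),
        n ≤ Nat.card V ∧
        EdgeConnectedIn ends T (3 * k) ∧
        ¬ ∃ Q : Fin k → Set E,
            (∀ i, IsConnector ends T (Q i)) ∧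
            Pairwise fun i j => Disjoint (Q i) (Q j) := by
  have : NeZero (6 * k) := ⟨by omega⟩
  have hh0 : 0 < h := by omega
  refine ⟨Vx (ZMod (6 * k) × Fin 3) ((ZMod (6 * k) × Fin 3) × Fin h) Bool n,
    Ed ((ZMod (6 * k) × Fin 3) × Fin h), Fintype.ofFinite _, Fintype.ofFinite _,
    netEnds n (ringEn (Equiv.addRight 1)) (ringTg k h), netT _ _ _ n, le_card_Vx, ?_, ?_⟩
  · refine edgeConnectedIn_net (fun S hS => ring_reach (by omega) S hS) ?_
    intro S hS m
    by_contra! hcon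
    -- the `3 * k` links that lead to `m`
    let f : ℕ → (ZMod (6 * k) × Fin 3) × Fin h :=
      fun c => ((((if m then c else c + 3 * k : ℕ) : ZMod (6 * k)), 0), ⟨0, hh0⟩)
    have hval : ∀ c < 3 * k, ((if m then c else c + 3 * k : ℕ) : ZMod (6 * k)).val =
        if m then c else c + 3 * k := by
      intro c hc
      rw [ZMod.val_natCast, Nat.mod_eq_of_lt]
      split_ifs <;> omega
    have hinj : Set.InjOn f (Finset.range (3 * k)) := by
      intro c hc c' hc' hcc
      rw [Finset.coe_range, Set.mem_Iio] at hc hc'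
      have h1 := congrArg (fun j => j.1.1.val) hcc
      simp only [f, hval c hc, hval c' hc'] at h1
      split_ifs at h1 <;> omega
    have hsub : (Finset.range (3 * k)).image f ⊆ S := by
      intro j hj
      obtain ⟨c, hc, rfl⟩ := Finset.mem_image.1 hj
      rw [Finset.mem_range] at hc
      by_contra hjS
      refine hcon _ hjS ?_
      simp only [ringTg, f, hval c hc]
      cases m <;> simp [hc]
    have := Finset.card_le_card hsub
    rw [Finset.card_image_of_injOn hinj, Finset.card_range] at this
    omega
  · rintro ⟨Q, hQ, hd⟩
    obtain ⟨nn, cc, rr, p1, p2, p3, p4, p5⟩ := exists_profile Q hQ hd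
    refine ring_false (Equiv.addRight 1) hk hh (by simp) ⟨0, hh0⟩ (ringTg k h) ?_ nn cc rr
      p1 p2 p3 p4 p5
    intro i c r hne
    simp only [ringTg] at hne
    split_ifs at hne with hcr
    · exact ⟨hcr.1, Fin.ext hcr.2⟩
    · exact absurd rfl hne


/-! ### A cubic graph of blobs: the case `k = 1` -/

/-- The first ends of the links of a fragment: its twelve inner links (those of the Petersen
graph minus a vertex), the link to the next fragment, and the link to the hub. -/
def fragA (e : Fin 14) : ℕ := [0, 1, 2, 3, 4, 0, 1, 2, 3, 5, 6, 5, 4, 7].getD e.val 0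

/-- The second ends of the inner links of a fragment. -/
def fragB (e : Fin 14) : ℕ := [1, 2, 3, 4, 0, 5, 6, 7, 8, 7, 8, 8].getD e.val 0

/-- The number of the blob `v` of the fragment `f`. -/
def blob (f : Fin 3) (v : Fin 9) : Fin 28 := Fin.ofNat 28 (9 * f.val + v.val)

/-- The ends of the 42 links of the cubic graph made of three fragments and a hub, which has
number `27`. -/
def cubEn (j : Fin 3 × Fin 14) : Bool → Fin 28
  | true => Fin.ofNat 28 (9 * j.1.val + fragA j.2)
  | false =>
    if j.2.val < 12 then Fin.ofNat 28 (9 * j.1.val + fragB j.2)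
    else if j.2.val = 12 then Fin.ofNat 28 (9 * ((j.1.val + 1) % 3) + 6)
    else 27

/-- The position of a link in the bit masks below. -/
def linkCode (j : Fin 3 × Fin 14) : ℕ := 14 * j.1.val + j.2.val

/-- One pass through a list of links. Sets of blobs and of links are encoded by the binary digits
of numbers; the blobs that can be reached from `m` by links of `t` are added to `m`. -/
def grow (t : ℕ) : List (Fin 3 × Fin 14) → ℕ → ℕ
  | [], m => m
  | j :: l, m => grow t l <|
      if t.testBit (linkCode j) then
        if m.testBit (cubEn j true).val then m ||| 2 ^ (cubEn j false).val
        else if m.testBit (cubEn j false).val then m ||| 2 ^ (cubEn j true).val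
        else m
      else m

/-- `i` passes through all links. -/
def growAll (t : ℕ) : ℕ → ℕ → ℕ
  | 0, m => m
  | i + 1, m => growAll t i
      (grow t ((List.finRange 3).flatMap fun f => (List.finRange 14).map fun e => (f, e)) m)

/-- Bit masks of thirteen spanning trees of the cubic graph such that any two links are avoided by
one of them. -/
def trees : List ℕ :=
  [3211055299531, 3515377235195, 2944060020541, 3705390157021, 4212743978782, 2156878238701,
    3838329059879, 3173844298998, 3981693381102, 4238559207408, 1371869669331, 342896669950,
    2171596663867]

theorem trees_spanning : ∀ t ∈ trees, growAll t 12 1 = 2 ^ 28 - 1 := by decide +kernel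

theorem trees_avoid : ∀ a b : Fin 3 × Fin 14, ∃ t ∈ trees,
    t.testBit (linkCode a) = false ∧ t.testBit (linkCode b) = false := by decide +kernel

section Reach

variable {r : Fin 28 → Fin 28 → Prop} {t : ℕ}

theorem grow_sound (hr : ∀ j, t.testBit (linkCode j) → ∀ s, r (cubEn j s) (cubEn j (!s)))
    (l : List (Fin 3 × Fin 14)) (m : ℕ)
    (hm : ∀ b : Fin 28, m.testBit b.val → Relation.ReflTransGen r 0 b) :
    ∀ b : Fin 28, (grow t l m).testBit b.val → Relation.ReflTransGen r 0 b := by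
  induction l generalizing m with
  | nil => exact hm
  | cons j l ih =>
    have key : t.testBit (linkCode j) → ∀ s, m.testBit (cubEn j s).val → ∀ b : Fin 28,
        (m ||| 2 ^ (cubEn j (!s)).val).testBit b.val → Relation.ReflTransGen r 0 b := by
      intro h1 s hs b hb
      rw [Nat.testBit_lor, Bool.or_eq_true, Nat.testBit_two_pow, decide_eq_true_eq] at hb
      rcases hb with hb | hb
      · exact hm b hb
      · rw [← Fin.ext hb]
        exact (hm _ hs).tail (hr j h1 s)
    refine ih _ ?_
    split_ifs with h1 h2 h3
    · exact key h1 true h2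
    · exact key h1 false h3
    · exact hm
    · exact hm

theorem growAll_sound (hr : ∀ j, t.testBit (linkCode j) → ∀ s, r (cubEn j s) (cubEn j (!s)))
    (i m : ℕ) (hm : ∀ b : Fin 28, m.testBit b.val → Relation.ReflTransGen r 0 b) :
    ∀ b : Fin 28, (growAll t i m).testBit b.val → Relation.ReflTransGen r 0 b := by
  induction i generalizing m with
  | zero => exact hm
  | succ i ih => exact ih _ (grow_sound hr _ m hm)

end Reach

theorem cub_reach (S : Finset (Fin 3 × Fin 14)) (hS : S.card < 3) (b b' : Fin 28) :
    Relation.ReflTransGen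
      (fun x y => ∃ j, j ∉ S ∧ ∃ s, cubEn j s = x ∧ cubEn j (!s) = y) b b' := by
  obtain ⟨a₁, a₂, ha⟩ : ∃ a₁ a₂, S ⊆ {a₁, a₂} := by
    have : S.card = 0 ∨ S.card = 1 ∨ S.card = 2 := by omega
    rcases this with h | h | h
    · rw [Finset.card_eq_zero] at h
      exact ⟨0, 0, by simp [h]⟩
    · obtain ⟨a, rfl⟩ := Finset.card_eq_one.1 h
      exact ⟨a, a, by simp⟩
    · obtain ⟨a, a', -, rfl⟩ := Finset.card_eq_two.1 h
      exact ⟨a, a', subset_rfl⟩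
  obtain ⟨t, ht, h1, h2⟩ := trees_avoid a₁ a₂
  set r : Fin 28 → Fin 28 → Prop :=
    fun x y => ∃ j, j ∉ S ∧ ∃ s, cubEn j s = x ∧ cubEn j (!s) = y with hr
  have hall : ∀ b, Relation.ReflTransGen r 0 b := by
    intro b
    refine growAll_sound (t := t) ?_ 12 1 ?_ b ?_
    · intro j hj s
      refine ⟨j, fun hjS => ?_, s, rfl, rfl⟩
      have := ha hjS
      rw [Finset.mem_insert, Finset.mem_singleton] at this
      rcases this with rfl | rfl <;> simp_all
    · intro b hb
      have : b = 0 := by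
        revert b; decide
      rw [this]
    · rw [trees_spanning t ht, Nat.testBit_two_pow_sub_one]
      simp
  have hsymm : ∀ {x y}, Relation.ReflTransGen r x y → Relation.ReflTransGen r y x := by
    intro x y h
    induction h with
    | refl => exact .refl
    | tail _ hstep ih =>
      obtain ⟨j, hj, s, h1, h2⟩ := hstep
      exact .head ⟨j, hj, !s, h2, by rw [Bool.not_not]; exact h1⟩ ih
  exact (hsymm (hall b)).trans (hall b')

/-- The cubic graph has no profile for `k = 1`. A double count leaves a fragment without defect;
there, the links crossed form the complement of a perfect matching of the Petersen graph, that
is, two pentagons, one of which lies in the fragment. -/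
theorem cub_false (nn : Fin 3 × Fin 14 → Bool → ℕ) (cc : Fin 3 × Fin 14 → ℕ)
    (p1 : ∀ j s, nn j s + cc j ≤ 1)
    (p4 : ∑ j, (nn j true + nn j false + cc j) = 55)
    (p5 : ∀ X : Finset (Fin 28), X.Nonempty →
        (∑ j, ((if cubEn j true ∈ X then nn j true else 0) +
          (if cubEn j false ∈ X then nn j false else 0) +
          (if cubEn j true ∈ X ∧ cubEn j false ∈ X then cc j else 0))) + 1 ≤
            2 * X.card) : False := by
  -- the numbers of paths within a blob and of crossed links at a blob
  let ν : Fin 28 → ℕ := fun b => ∑ j, ((if cubEn j true = b then nn j true else 0) +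
    (if cubEn j false = b then nn j false else 0))
  let δ : Fin 28 → ℕ := fun b => ∑ j, ((if cubEn j true = b then cc j else 0) +
    (if cubEn j false = b then cc j else 0))
  have hsum : ∑ b, (2 * ν b + δ b) = 110 := by
    have e1 : ∑ b, ν b = ∑ j, (nn j true + nn j false) := by
      simp only [ν]
      rw [Finset.sum_comm]
      simp [Finset.sum_add_distrib]
    have e2 : ∑ b, δ b = ∑ j, (cc j + cc j) := by
      simp only [δ]
      rw [Finset.sum_comm]
      simp [Finset.sum_add_distrib]
    rw [Finset.sum_add_distrib, ← Finset.mul_sum, e1, e2]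
    simp only [Finset.sum_add_distrib] at p4 ⊢
    omega
  -- at a blob, `2 * ν + δ` is at most `4`, and only two units are missing in total, so that one of
  -- the three fragments attains the bound everywhere
  have F1 : ∀ b, ν b + δ b ≤ 3 := by
    intro b
    have hdeg : ∀ b, ∑ j, ((if cubEn j true = b then 1 else 0) +
      (if cubEn j false = b then 1 else 0)) = 3 := by decide +kernel
    rw [← hdeg b, ← Finset.sum_add_distrib]
    refine Finset.sum_le_sum fun j _ => ?_
    have := p1 j true
    have := p1 j false
    split_ifs <;> omega
  have F2 : ∀ b, ν b ≤ 1 := by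
    intro b
    have := p5 {b} (Finset.singleton_nonempty b)
    simp only [Finset.mem_singleton, Finset.card_singleton] at this
    rw [Finset.sum_add_distrib] at this
    change ν b + _ + 1 ≤ _ at this
    omega
  -- a fragment without defect
  obtain ⟨f, hf⟩ : ∃ f, ∀ v, ν (blob f v) = 1 ∧ δ (blob f v) = 2 := by
    by_contra! hcon
    choose v hv using hcon
    have h3 : ∀ u : Fin 3 → Fin 9,
        (Finset.univ.image fun f => blob f (u f)).card = 3 := by
      intro u
      rw [Finset.card_image_of_injective _, Finset.card_univ, Fintype.card_fin]
      intro f f' hff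
      have hinj : ∀ f f' w w', blob f w = blob f' w' → f = f' := by decide +kernel
      exact hinj _ _ _ _ hff
    have h4 : ∑ b, (2 * ν b + δ b + if b ∈ Finset.univ.image (fun f => blob f (v f))
        then 1 else 0) ≤ ∑ b : Fin 28, 4 := by
      refine Finset.sum_le_sum fun b _ => ?_
      have := F1 b
      have := F2 b
      split_ifs with hb
      · obtain ⟨f, -, rfl⟩ := Finset.mem_image.1 hb
        have := hv f
        omega
      · omega
    rw [Finset.sum_add_distrib, hsum, ← Finset.sum_filter, Finset.filter_univ_mem,
      Finset.sum_const, h3 v] at h4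
    simp at h4
  -- as each blob contains a tree edge, the crossed links form a forest
  have hforest : ∀ (X : Finset (Fin 9)) (D : Finset (Fin 14)), X.Nonempty →
      (∀ e ∈ D, cubEn (f, e) true ∈ X.image (blob f) ∧ cubEn (f, e) false ∈ X.image (blob f)) →
      ∑ e ∈ D, cc (f, e) + 1 ≤ X.card := by
    intro X D hX hD
    set Y := X.image (blob f) with hY
    have h1 := p5 Y (hX.image _)
    rw [Finset.sum_add_distrib] at h1
    have h2 : ∑ j, ((if cubEn j true ∈ Y then nn j true else 0) +
        (if cubEn j false ∈ Y then nn j false else 0)) = Y.card := by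
      have e : ∑ b ∈ Y, ν b = Y.card := by
        rw [Finset.card_eq_sum_ones]
        refine Finset.sum_congr rfl fun b hb => ?_
        obtain ⟨v, -, rfl⟩ := Finset.mem_image.1 hb
        exact (hf v).1
      rw [← e]
      simp only [ν]
      rw [Finset.sum_comm]
      simp [Finset.sum_add_distrib]
    have h3 : ∑ e ∈ D, cc (f, e) ≤
        ∑ j, (if cubEn j true ∈ Y ∧ cubEn j false ∈ Y then cc j else 0) := by
      rw [← Finset.sum_filter]
      have : ∑ e ∈ D, cc (f, e) = ∑ j ∈ D.image (fun e => (f, e)), cc j := by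
        rw [Finset.sum_image]
        intro e _ e' _ h
        simpa using h
      rw [this]
      refine Finset.sum_le_sum_of_subset fun j hj => ?_
      obtain ⟨e, he, rfl⟩ := Finset.mem_image.1 hj
      exact Finset.mem_filter.2 ⟨Finset.mem_univ _, hD e he⟩
    have h4 : Y.card ≤ X.card := Finset.card_image_le
    have h5 : Y.card = X.card := by
      refine Finset.card_image_of_injective X ?_
      have hinj : ∀ f w w', blob f w = blob f w' → w = w' := by decide +kernel
      exact fun w w' => hinj f w w'
    omega
  have hdeg : ∀ (v : Fin 9) (D D' : Finset (Fin 3 × Fin 14)),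
      (Finset.univ.filter fun j => cubEn j true = blob f v) = D →
      (Finset.univ.filter fun j => cubEn j false = blob f v) = D' →
      ∑ j ∈ D, cc j + ∑ j ∈ D', cc j = 2 := by
    rintro v D D' rfl rfl
    rw [← (hf v).2]
    simp only [δ]
    rw [Finset.sum_add_distrib, Finset.sum_filter, Finset.sum_filter]
  -- every blob of `f` meets exactly two crossed links
  have d0 := hdeg 0 {(f, 0), (f, 5)} {(f, 4)}
    ((by decide +kernel : ∀ f : Fin 3, (Finset.univ.filter fun j => cubEn j true = blob f 0) =
      {(f, 0), (f, 5)}) f)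
    ((by decide +kernel : ∀ f : Fin 3, (Finset.univ.filter fun j => cubEn j false = blob f 0) =
      {(f, 4)}) f)
  have d1 := hdeg 1 {(f, 1), (f, 6)} {(f, 0)}
    ((by decide +kernel : ∀ f : Fin 3, (Finset.univ.filter fun j => cubEn j true = blob f 1) =
      {(f, 1), (f, 6)}) f)
    ((by decide +kernel : ∀ f : Fin 3, (Finset.univ.filter fun j => cubEn j false = blob f 1) =
      {(f, 0)}) f)
  have d2 := hdeg 2 {(f, 2), (f, 7)} {(f, 1)}
    ((by decide +kernel : ∀ f : Fin 3, (Finset.univ.filter fun j => cubEn j true = blob f 2) =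
      {(f, 2), (f, 7)}) f)
    ((by decide +kernel : ∀ f : Fin 3, (Finset.univ.filter fun j => cubEn j false = blob f 2) =
      {(f, 1)}) f)
  have d3 := hdeg 3 {(f, 3), (f, 8)} {(f, 2)}
    ((by decide +kernel : ∀ f : Fin 3, (Finset.univ.filter fun j => cubEn j true = blob f 3) =
      {(f, 3), (f, 8)}) f)
    ((by decide +kernel : ∀ f : Fin 3, (Finset.univ.filter fun j => cubEn j false = blob f 3) =
      {(f, 2)}) f)
  have d4 := hdeg 4 {(f, 4), (f, 12)} {(f, 3)}
    ((by decide +kernel : ∀ f : Fin 3, (Finset.univ.filter fun j => cubEn j true = blob f 4) =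
      {(f, 4), (f, 12)}) f)
    ((by decide +kernel : ∀ f : Fin 3, (Finset.univ.filter fun j => cubEn j false = blob f 4) =
      {(f, 3)}) f)
  have d5 := hdeg 5 {(f, 9), (f, 11)} {(f, 5)}
    ((by decide +kernel : ∀ f : Fin 3, (Finset.univ.filter fun j => cubEn j true = blob f 5) =
      {(f, 9), (f, 11)}) f)
    ((by decide +kernel : ∀ f : Fin 3, (Finset.univ.filter fun j => cubEn j false = blob f 5) =
      {(f, 5)}) f)
  have d6 := hdeg 6 {(f, 10)} {(f, 6), (f + 2, 12)}
    ((by decide +kernel : ∀ f : Fin 3, (Finset.univ.filter fun j => cubEn j true = blob f 6) =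
      {(f, 10)}) f)
    ((by decide +kernel : ∀ f : Fin 3, (Finset.univ.filter fun j => cubEn j false = blob f 6) =
      {(f, 6), (f + 2, 12)}) f)
  have d7 := hdeg 7 {(f, 13)} {(f, 7), (f, 9)}
    ((by decide +kernel : ∀ f : Fin 3, (Finset.univ.filter fun j => cubEn j true = blob f 7) =
      {(f, 13)}) f)
    ((by decide +kernel : ∀ f : Fin 3, (Finset.univ.filter fun j => cubEn j false = blob f 7) =
      {(f, 7), (f, 9)}) f)
  have d8 := hdeg 8 ∅ {(f, 8), (f, 10), (f, 11)}
    ((by decide +kernel : ∀ f : Fin 3, (Finset.univ.filter fun j => cubEn j true = blob f 8) =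
      ∅) f)
    ((by decide +kernel : ∀ f : Fin 3, (Finset.univ.filter fun j => cubEn j false = blob f 8) =
      {(f, 8), (f, 10), (f, 11)}) f)
  -- the crossed links contain neither all edges of a pentagon of `f` nor more than eight inner
  -- links
  have c0 := hforest {0, 1, 2, 3, 4, 5, 6, 7, 8} {0, 1, 2, 3, 4, 5, 6, 7, 8, 9, 10, 11} (by decide)
    ((by decide +kernel : ∀ f : Fin 3, ∀ e ∈ ({0, 1, 2, 3, 4, 5, 6, 7, 8, 9, 10, 11} : Finset (Fin 14)),
      cubEn (f, e) true ∈ ({0, 1, 2, 3, 4, 5, 6, 7, 8} : Finset (Fin 9)).image (blob f) ∧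
        cubEn (f, e) false ∈ ({0, 1, 2, 3, 4, 5, 6, 7, 8} : Finset (Fin 9)).image (blob f)) f)
  have c1 := hforest {0, 1, 2, 3, 4} {0, 1, 2, 3, 4} (by decide)
    ((by decide +kernel : ∀ f : Fin 3, ∀ e ∈ ({0, 1, 2, 3, 4} : Finset (Fin 14)),
      cubEn (f, e) true ∈ ({0, 1, 2, 3, 4} : Finset (Fin 9)).image (blob f) ∧
        cubEn (f, e) false ∈ ({0, 1, 2, 3, 4} : Finset (Fin 9)).image (blob f)) f)
  have c2 := hforest {0, 1, 2, 5, 7} {0, 1, 5, 7, 9} (by decide)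
    ((by decide +kernel : ∀ f : Fin 3, ∀ e ∈ ({0, 1, 5, 7, 9} : Finset (Fin 14)),
      cubEn (f, e) true ∈ ({0, 1, 2, 5, 7} : Finset (Fin 9)).image (blob f) ∧
        cubEn (f, e) false ∈ ({0, 1, 2, 5, 7} : Finset (Fin 9)).image (blob f)) f)
  have c3 := hforest {0, 1, 5, 6, 8} {0, 5, 6, 10, 11} (by decide)
    ((by decide +kernel : ∀ f : Fin 3, ∀ e ∈ ({0, 5, 6, 10, 11} : Finset (Fin 14)),
      cubEn (f, e) true ∈ ({0, 1, 5, 6, 8} : Finset (Fin 9)).image (blob f) ∧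
        cubEn (f, e) false ∈ ({0, 1, 5, 6, 8} : Finset (Fin 9)).image (blob f)) f)
  have c4 := hforest {0, 3, 4, 5, 8} {3, 4, 5, 8, 11} (by decide)
    ((by decide +kernel : ∀ f : Fin 3, ∀ e ∈ ({3, 4, 5, 8, 11} : Finset (Fin 14)),
      cubEn (f, e) true ∈ ({0, 3, 4, 5, 8} : Finset (Fin 9)).image (blob f) ∧
        cubEn (f, e) false ∈ ({0, 3, 4, 5, 8} : Finset (Fin 9)).image (blob f)) f)
  have c5 := hforest {1, 2, 3, 6, 8} {1, 2, 6, 8, 10} (by decide)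
    ((by decide +kernel : ∀ f : Fin 3, ∀ e ∈ ({1, 2, 6, 8, 10} : Finset (Fin 14)),
      cubEn (f, e) true ∈ ({1, 2, 3, 6, 8} : Finset (Fin 9)).image (blob f) ∧
        cubEn (f, e) false ∈ ({1, 2, 3, 6, 8} : Finset (Fin 9)).image (blob f)) f)
  have c6 := hforest {2, 3, 5, 7, 8} {2, 7, 8, 9, 11} (by decide)
    ((by decide +kernel : ∀ f : Fin 3, ∀ e ∈ ({2, 7, 8, 9, 11} : Finset (Fin 14)),
      cubEn (f, e) true ∈ ({2, 3, 5, 7, 8} : Finset (Fin 9)).image (blob f) ∧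
        cubEn (f, e) false ∈ ({2, 3, 5, 7, 8} : Finset (Fin 9)).image (blob f)) f)
  have hc : ∀ j, cc j ≤ 1 := fun j => by have := p1 j true; omega
  simp at d0 d1 d2 d3 d4 d5 d6 d7 d8 c0 c1 c2 c3 c4 c5 c6
  have b0 := hc (f, 0)
  have b1 := hc (f, 1)
  have b2 := hc (f, 2)
  have b3 := hc (f, 3)
  have b4 := hc (f, 4)
  have b5 := hc (f, 5)
  have b6 := hc (f, 6)
  have b7 := hc (f, 7)
  have b8 := hc (f, 8)
  have b9 := hc (f, 9)
  have b10 := hc (f, 10)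
  have b11 := hc (f, 11)
  have b12 := hc (f, 12)
  have b13 := hc (f, 13)
  have b14 := hc (f + 2, 12)
  -- summing the degrees, exactly two of the three links that leave `f` are crossed
  interval_cases cc (f, 12) <;> interval_cases cc (f, 13) <;> interval_cases cc (f + 2, 12) <;>
    interval_cases cc (f, 0) <;> omega

theorem one_case (n : ℕ) :
    ∃ (V E : Type) (_ : Fintype V) (_ : Fintype E) (ends : E → Sym2 V) (T : Set V),
        n ≤ Nat.card V ∧
        EdgeConnectedIn ends T (3 * 1) ∧
        ¬ ∃ Q : Fin 1 → Set E,
            (∀ i, IsConnector ends T (Q i)) ∧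
            Pairwise fun i j => Disjoint (Q i) (Q j) := by
  refine ⟨Vx (Fin 28) (Fin 3 × Fin 14) Empty n, Ed (Fin 3 × Fin 14), Fintype.ofFinite _,
    Fintype.ofFinite _, netEnds n cubEn (fun _ => none), netT _ _ _ n, le_card_Vx, ?_, ?_⟩
  · exact edgeConnectedIn_net (fun S hS => cub_reach S hS) fun _ _ m => m.elim
  · rintro ⟨Q, hQ, hd⟩
    obtain ⟨nn, cc, rr, p1, p2, p3, p4, p5⟩ := exists_profile Q hQ hd
    have hr : ∀ j s, rr j s = 0 := fun j s => p3 j s rfl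
    simp only [hr, add_zero] at p1 p4
    refine cub_false nn cc p1 ?_ fun X hX => ?_
    · simpa using p4
    · simpa using p5 X hX

/-- For every positive integer `k` that equals `1` or is
even, and every `n`, there is a finite graph with terminals `(G, T)` with at
least `n` vertices such that `T` is `3k`-edge-connected in `G` but `G` does not
contain `k` pairwise edge-disjoint `T`-connectors.  In particular, the
conjecture of West and Wu — that `3k`-edge-connectivity of `T` in `G` always
yields `k` pairwise edge-disjoint `T`-connectors — is false. -/
theorem counterexamples_and_west_wu_false :
    (∀ k n : ℕ, 0 < k → (k = 1 ∨ Even k) →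
      ∃ (V E : Type) (_ : Fintype V) (_ : Fintype E) (ends : E → Sym2 V) (T : Set V),
        n ≤ Nat.card V ∧
        EdgeConnectedIn ends T (3 * k) ∧
        ¬ ∃ Q : Fin k → Set E,
            (∀ i, IsConnector ends T (Q i)) ∧
            Pairwise fun i j => Disjoint (Q i) (Q j)) ∧
    ¬ (∀ k : ℕ, 0 < k →
        ∀ (V E : Type) (_ : Fintype V) (_ : Fintype E) (ends : E → Sym2 V) (T : Set V),
          EdgeConnectedIn ends T (3 * k) →
          ∃ Q : Fin k → Set E,
            (∀ i, IsConnector ends T (Q i)) ∧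
            Pairwise fun i j => Disjoint (Q i) (Q j)) := by
  refine ⟨fun k n hk hcase => ?_, fun H => ?_⟩
  · rcases hcase with rfl | ⟨r, rfl⟩
    · exact one_case n
    · exact even_case hk (h := 3 * r) (by omega) n
  · obtain ⟨V, E, fV, fE, ends, T, -, hc, hno⟩ := one_case 0
    exact hno (H 1 one_pos V E fV fE ends T hc)

end TConnectors
end

section
/- Let (G1,T1) and (G2,T2) be finite graphs with terminals (parallel edges allowed) on disjoint vertex sets, let d be a positive integer, and suppose that for each i ∈ {1,2} we have |Ti| ≥ 2, the set Ti is d-edge-connected in Gi, and ti ∈ Ti is a terminal of degree exactly d in Gi. Let h be a bijection from the set of edges of G1 incident with t1 to the set of edges of G2 incident with t2. Let G be the graph on vertex set (V(G1)∖{t1}) ∪ (V(G2)∖{t2}) whose edges are: all edges of G1 − t1, all edges of G2 − t2, and, for each edge e of G1 incident with t1, one new edge joining the endvertex of e other than t1 to the endvertex of h(e) other than t2; let T = (T1 ∪ T2) ∖ {t1, t2}. Then T is d-edge-connected in G. -/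
/-!
Fix a set `S` of fewer than `d` edges of the insertion `G`.  It suffices to show that every terminal
`a` of `G₁ - t₁` is joined in `G - S` to every terminal `c` of `G₂ - t₂`: both kinds of terminals
exist, so two terminals on the same side are then joined through one on the other side.

Suppose not, and let `X` be the set of vertices reachable from `a` in `G - S`, so that every edge of
`G` between `X` and its complement lies in `S`.  Write `S = S₁ ∪ S₂ ∪ S₃` according to whether an
edge comes from `G₁ - t₁`, from `G₂ - t₂`, or is one of the `d` new edges.  Let `P` be the set of new
edges whose end in `G₁` lies in `X`, and `Q` the set of those whose end in `G₂` lies outside `X`.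
The cut of `G₁` around `X ∩ V(G₁)` separates `a` from `t₁`, hence `d ≤ |S₁| + |P|`; the cut of `G₂`
around `V(G₂ - t₂) \ X` separates `c` from `t₂`, hence `d ≤ |S₂| + |Q|` (both by `side_cut`).  Edges
in `P ∩ Q` cross `X`, so `P ∩ Q ⊆ S₃`, while `|P ∪ Q| ≤ d`.  Adding up,
`2d ≤ |S₁| + |S₂| + |P ∪ Q| + |P ∩ Q| ≤ |S| + d`, contradicting `|S| < d`.
-/

/-
Graphs with terminals are modelled as multigraphs: a vertex type, an edge type,
and an incidence map `ends : E → Sym2 V` assigning to each edge its unordered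
pair of endvertices (parallel edges are allowed).  Two graphs given on distinct
types automatically have disjoint vertex sets.
-/

namespace TConnectors

variable {V E : Type}

/-- The degree of a vertex: the number of incident edges, counting parallel
edges with multiplicity (and loops twice). -/
noncomputable def degree (ends : E → Sym2 V) (v : V) : ℕ :=
  Nat.card {e : E // v ∈ ends e} + Nat.card {e : E // ends e = s(v, v)}

theorem exists_restrictSym2 {α : Type} (p : α → Prop) (z : Sym2 α) (h : ∀ x ∈ z, p x) :
    ∃ w : Sym2 {x // p x}, Sym2.map Subtype.val w = z := by
  revert h
  induction z using Sym2.inductionOn with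
  | hf x y =>
    intro h
    exact ⟨s(⟨x, h x (Sym2.mem_mk_left x y)⟩, ⟨y, h y (Sym2.mem_mk_right x y)⟩), by simp⟩

/-- Restriction of an unordered pair to a subtype containing both entries. -/
noncomputable def restrictSym2 {α : Type} (p : α → Prop) (z : Sym2 α) (h : ∀ x ∈ z, p x) :
    Sym2 {x // p x} :=
  Classical.choose (exists_restrictSym2 p z h)

/-- The incidence map of the insertion of `G₂` into `G₁` via the bijection `h`
(between the edges of `G₁` incident with `t₁` and the edges of `G₂` incident
with `t₂`).  The vertices are those of `G₁ - t₁` together with those of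
`G₂ - t₂`; the edges are the edges of `G₁ - t₁`, the edges of `G₂ - t₂`, and,
for each edge `e` of `G₁` incident with `t₁`, one new edge joining the
endvertex of `e` other than `t₁` to the endvertex of `h e` other than `t₂`. -/
noncomputable def insertEnds {V₁ E₁ V₂ E₂ : Type}
    (ends₁ : E₁ → Sym2 V₁) (ends₂ : E₂ → Sym2 V₂) (t₁ : V₁) (t₂ : V₂)
    (hnl₁ : ∀ e, ends₁ e ≠ s(t₁, t₁)) (hnl₂ : ∀ e, ends₂ e ≠ s(t₂, t₂))
    (h : {e : E₁ // t₁ ∈ ends₁ e} ≃ {e : E₂ // t₂ ∈ ends₂ e}) :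
    ({e : E₁ // t₁ ∉ ends₁ e} ⊕ {e : E₂ // t₂ ∉ ends₂ e} ⊕ {e : E₁ // t₁ ∈ ends₁ e}) →
      Sym2 ({x : V₁ // x ≠ t₁} ⊕ {x : V₂ // x ≠ t₂})
  | Sum.inl e =>
      Sym2.map Sum.inl
        (restrictSym2 (· ≠ t₁) (ends₁ e.1) (fun x hx hxt => e.2 (hxt ▸ hx)))
  | Sum.inr (Sum.inl e) =>
      Sym2.map Sum.inr
        (restrictSym2 (· ≠ t₂) (ends₂ e.1) (fun x hx hxt => e.2 (hxt ▸ hx)))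
  | Sum.inr (Sum.inr e) =>
      s(Sum.inl ⟨Sym2.Mem.other e.2,
          fun hq => hnl₁ e.1 (by rw [← Sym2.other_spec e.2, hq])⟩,
        Sum.inr ⟨Sym2.Mem.other (h e).2,
          fun hq => hnl₂ (h e).1 (by rw [← Sym2.other_spec (h e).2, hq])⟩)

/-- `u` and `v` are joined by an edge outside `S`. -/
def Step (ends : E → Sym2 V) (S : Finset E) (u v : V) : Prop :=
  ∃ e, e ∉ S ∧ ends e = s(u, v)

theorem reach_iff_walk (ends : E → Sym2 V) (S : Finset E) (u v : V) :
    Relation.ReflTransGen (Step ends S) u v ↔ ∃ p : Walk ends u v, ∀ e ∈ p.edges, e ∉ S := by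
  constructor
  · intro hr
    induction hr using Relation.ReflTransGen.head_induction_on with
    | refl => exact ⟨.nil _, by simp [Walk.edges]⟩
    | head hs _ ih =>
      obtain ⟨e, heS, he⟩ := hs
      obtain ⟨p, hp⟩ := ih
      refine ⟨.cons e he p, ?_⟩
      simpa [Walk.edges] using ⟨heS, hp⟩
  · rintro ⟨p, hp⟩
    induction p with
    | nil => exact .refl
    | cons e he p ih =>
      simp only [Walk.edges, List.mem_cons, forall_eq_or_imp] at hp
      exact .head ⟨e, hp.1, he⟩ (ih hp.2)

theorem reach_symm {ends : E → Sym2 V} {S : Finset E} {u v : V}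
    (hr : Relation.ReflTransGen (Step ends S) u v) :
    Relation.ReflTransGen (Step ends S) v u := by
  have : Std.Symm (Step ends S) :=
    ⟨fun _ _ ⟨e, heS, he⟩ => ⟨e, heS, he.trans Sym2.eq_swap⟩⟩
  exact Relation.ReflTransGen.stdSymm.symm _ _ hr

/-- The easy half of Menger's theorem: a set of edges containing every edge that leaves `X` has at
least `d` elements if `X` separates two terminals. -/
theorem EdgeConnectedIn.le_card_cut {ends : E → Sym2 V} {T : Set V} {d : ℕ}
    (hconn : EdgeConnectedIn ends T d) (X : Set V) {a b : V} (ha : a ∈ T) (hb : b ∈ T)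
    (haX : a ∈ X) (hbX : b ∉ X) (S : Finset E)
    (hS : ∀ e u v, ends e = s(u, v) → u ∈ X → v ∉ X → e ∈ S) : d ≤ S.card := by
  by_contra! hlt
  have hr := (reach_iff_walk ends S a b).2 (hconn S hlt a ha b hb)
  refine hbX ?_
  clear hb hbX
  induction hr with
  | refl => exact haX
  | tail _ hs ih =>
    obtain ⟨e, heS, he⟩ := hs
    by_contra hv
    exact heS (hS e _ _ he ih hv)

/-- The cut inequality for a vertex set `X` avoiding the terminal `t` and containing another
terminal `a`, with the cut edges divided into those of the graph minus `t` (covered by `S`) and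
those incident with `t` (covered by `N`). -/
theorem side_cut {ends : E → Sym2 V} {T : Set V} {d : ℕ}
    (hconn : EdgeConnectedIn ends T d) {t : V} (ht : t ∈ T) (X : Set {x : V // x ≠ t})
    (a : {x : V // x ≠ t}) (ha : a.1 ∈ T) (haX : a ∈ X)
    (S : Finset {e : E // t ∉ ends e}) (N : Finset {e : E // t ∈ ends e})
    (hS : ∀ e x y, ends e.1 = s(x.1, y.1) → x ∈ X → y ∉ X → e ∈ S)
    (hN : ∀ e x, ends e.1 = s(t, x.1) → x ∈ X → e ∈ N) : d ≤ S.card + N.card := by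
  classical
  have hcut : d ≤ (S.map (.subtype _) ∪ N.map (.subtype _)).card := by
    refine hconn.le_card_cut (Subtype.val '' X) ha ht ⟨a, haX, rfl⟩ ?_ _ ?_
    · rintro ⟨x, -, hx⟩
      exact x.2 hx
    · rintro e _ v he ⟨x, hx, rfl⟩ hv
      rw [Finset.mem_union]
      by_cases hvt : v = t
      · subst hvt
        have hmem : v ∈ ends e := by simp [he]
        exact .inr (Finset.mem_map.2
          ⟨⟨e, hmem⟩, hN ⟨e, hmem⟩ x (he.trans Sym2.eq_swap) hx, rfl⟩)
      · have hmem : t ∉ ends e := by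
          rw [he, Sym2.mem_iff]
          rintro (h | h)
          · exact x.2 h.symm
          · exact hvt h.symm
        exact .inl (Finset.mem_map.2 ⟨⟨e, hmem⟩,
          hS ⟨e, hmem⟩ x ⟨v, hvt⟩ he hx fun hy => hv ⟨_, hy, rfl⟩, rfl⟩)
  simpa using hcut.trans (Finset.card_union_le _ _)

theorem restrictSym2_eq {α : Type} (p : α → Prop) (z : Sym2 α) (h : ∀ x ∈ z, p x)
    (x y : {x // p x}) (hz : z = s(x.1, y.1)) : restrictSym2 p z h = s(x, y) := by
  apply Sym2.map.injective Subtype.val_injective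
  rw [restrictSym2, Classical.choose_spec (exists_restrictSym2 p z h), hz, Sym2.map_mk]

theorem other_eq {α : Type} {z : Sym2 α} {t x : α} (ht : t ∈ z) (hz : z = s(t, x)) :
    Sym2.Mem.other ht = x :=
  Sym2.congr_right.1 ((Sym2.other_spec ht).trans hz)

/-- Let `(G₁, T₁)` and `(G₂, T₂)` be finite graphs with
terminals on disjoint vertex sets, `d > 0`, with `|Tᵢ| ≥ 2`, `Tᵢ`
`d`-edge-connected in `Gᵢ`, and `tᵢ ∈ Tᵢ` a terminal of degree exactly `d` in
`Gᵢ`.  Let `h` be a bijection between the edges of `G₁` incident with `t₁` and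
the edges of `G₂` incident with `t₂`, and let `G` be the insertion of `G₂` into
`G₁` via `h`, with terminal set `T = (T₁ ∪ T₂) \ {t₁, t₂}`.  Then `T` is
`d`-edge-connected in `G`. -/
theorem insertion_edge_connected {V₁ E₁ V₂ E₂ : Type}
    [Fintype V₁] [Fintype E₁] [Fintype V₂] [Fintype E₂]
    (ends₁ : E₁ → Sym2 V₁) (ends₂ : E₂ → Sym2 V₂)
    (T₁ : Set V₁) (T₂ : Set V₂) (d : ℕ) (hd : 0 < d)
    (hcard₁ : 2 ≤ Nat.card T₁) (hcard₂ : 2 ≤ Nat.card T₂)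
    (hconn₁ : EdgeConnectedIn ends₁ T₁ d) (hconn₂ : EdgeConnectedIn ends₂ T₂ d)
    (t₁ : V₁) (t₂ : V₂) (ht₁ : t₁ ∈ T₁) (ht₂ : t₂ ∈ T₂)
    (hnl₁ : ∀ e, ends₁ e ≠ s(t₁, t₁)) (hnl₂ : ∀ e, ends₂ e ≠ s(t₂, t₂))
    (hdeg₁ : degree ends₁ t₁ = d) (hdeg₂ : degree ends₂ t₂ = d)
    (h : {e : E₁ // t₁ ∈ ends₁ e} ≃ {e : E₂ // t₂ ∈ ends₂ e}) :
    EdgeConnectedIn (insertEnds ends₁ ends₂ t₁ t₂ hnl₁ hnl₂ h)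
      {v : {x : V₁ // x ≠ t₁} ⊕ {x : V₂ // x ≠ t₂} |
        Sum.elim (fun x => x.1 ∈ T₁) (fun x => x.1 ∈ T₂) v} d := by
  classical
  intro S hS
  set G := insertEnds ends₁ ends₂ t₁ t₂ hnl₁ hnl₂ h with hG
  -- Terminals on different sides are joined in `G - S`.
  have mixed : ∀ (a : {x : V₁ // x ≠ t₁}) (c : {x : V₂ // x ≠ t₂}), a.1 ∈ T₁ → c.1 ∈ T₂ →
      Relation.ReflTransGen (Step G S) (Sum.inl a) (Sum.inr c) := by
    intro a c ha hc
    by_contra hac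
    set X : Set ({x : V₁ // x ≠ t₁} ⊕ {x : V₂ // x ≠ t₂}) :=
      {v | Relation.ReflTransGen (Step G S) (Sum.inl a) v} with hXdef
    have hX : ∀ e x y, G e = s(x, y) → x ∈ X → y ∉ X → e ∈ S := by
      intro e x y he hx hy
      by_contra heS
      exact hy (Relation.ReflTransGen.tail hx ⟨e, heS, he⟩)
    let P : Finset {e : E₁ // t₁ ∈ ends₁ e} :=
      Finset.univ.filter fun e => ∃ x, x.1 = Sym2.Mem.other e.2 ∧ Sum.inl x ∈ X
    let Q : Finset {e : E₁ // t₁ ∈ ends₁ e} :=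
      Finset.univ.filter fun e => ∃ y, y.1 = Sym2.Mem.other (h e).2 ∧ Sum.inr y ∉ X
    have h₁ : d ≤ S.toLeft.card + P.card := by
      refine side_cut hconn₁ ht₁ {x | Sum.inl x ∈ X} a ha .refl _ _ ?_ ?_
      · intro e x y he hx hy
        rw [Finset.mem_toLeft]
        refine hX _ (Sum.inl x) (Sum.inl y) ?_ hx hy
        simp only [hG, insertEnds]
        rw [restrictSym2_eq _ _ _ x y he, Sym2.map_mk]
      · intro e x he hx
        exact Finset.mem_filter.2 ⟨Finset.mem_univ _, x, (other_eq e.2 he).symm, hx⟩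
    have h₂ : d ≤ S.toRight.toLeft.card + (Q.map h.toEmbedding).card := by
      refine side_cut hconn₂ ht₂ {y | Sum.inr y ∉ X} c hc hac _ _ ?_ ?_
      · intro e x y he hx hy
        rw [Finset.mem_toLeft, Finset.mem_toRight]
        refine hX _ (Sum.inr y) (Sum.inr x) ?_ (not_not.1 hy) hx
        simp only [hG, insertEnds]
        rw [restrictSym2_eq _ _ _ y x (he.trans Sym2.eq_swap), Sym2.map_mk]
      · intro e x he hx
        rw [Finset.mem_map_equiv]
        refine Finset.mem_filter.2 ⟨Finset.mem_univ _, x, ?_, hx⟩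
        refine (other_eq _ ?_).symm
        rw [Equiv.apply_symm_apply, he]
    have hPQ : (P ∩ Q).card ≤ S.toRight.toRight.card := by
      refine Finset.card_le_card fun e he => ?_
      simp only [P, Q, Finset.mem_inter, Finset.mem_filter, Finset.mem_univ, true_and] at he
      obtain ⟨⟨x, hxe, hx⟩, y, hye, hy⟩ := he
      rw [Finset.mem_toRight, Finset.mem_toRight]
      refine hX _ (Sum.inl x) (Sum.inr y) ?_ hx hy
      simp only [hG, insertEnds, ← hxe, ← hye]
    have hN : (P ∪ Q).card ≤ d := by
      refine (Finset.card_le_univ _).trans ?_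
      rw [← hdeg₁, degree, Nat.card_eq_fintype_card]
      exact Nat.le_add_right _ _
    have hadd := Finset.card_union_add_card_inter P Q
    have hS₁ := Finset.card_toLeft_add_card_toRight (u := S)
    have hS₂ := Finset.card_toLeft_add_card_toRight (u := S.toRight)
    rw [Finset.card_map] at h₂
    omega
  obtain ⟨a₀, ha₀, ha₀t⟩ := Set.exists_ne_of_one_lt_ncard (s := T₁) hcard₁ t₁
  obtain ⟨c₀, hc₀, hc₀t⟩ := Set.exists_ne_of_one_lt_ncard (s := T₂) hcard₂ t₂
  intro u hu v hv
  rw [← reach_iff_walk]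
  rcases u with a | c <;> rcases v with b | c'
  · exact (mixed a ⟨c₀, hc₀t⟩ hu hc₀).trans (reach_symm (mixed b ⟨c₀, hc₀t⟩ hv hc₀))
  · exact mixed a c' hu hv
  · exact reach_symm (mixed b c hv hu)
  · exact (reach_symm (mixed ⟨a₀, ha₀t⟩ c ha₀ hu)).trans (mixed ⟨a₀, ha₀t⟩ c' ha₀ hv)

end TConnectors
end

section
/- Let k be a positive integer and let Q be a finite graph (parallel edges allowed) on a vertex set V whose edge set is partitioned into k pairwise edge-disjoint subgraphs Q1, …, Qk (every edge of Q belongs to exactly one Qi). Let Y ⊆ V be a nonempty set of vertices such that every vertex of Y has degree exactly 2k in Q, and such that for each i ∈ {1,…,k} the induced subgraph Qi[Y] is a forest (contains no cycle). Then the number of edges of Q with exactly one endvertex in Y equals 2·(c1 + c2 + ⋯ + ck), where ci denotes the number of connected components of the induced subgraph Qi[Y] (isolated vertices counting as components). In particular, the number of edges of Q with exactly one endvertex in Y is at least 2k. -/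
/-!
The proof counts edge-vertex incidences in `Y`. Summing degrees over `Y` counts every edge inside
`Y` twice, every boundary edge once and every other edge not at all, so
`2k|Y| = 2·(edges inside Y) + |boundary|` (`sum_degree_eq`).

On the other hand, a forest on `Y` satisfies `edges + components = |Y|` (`card_add_numComponents`).
This is proved by adding the edges one at a time: an edge `ab` whose addition creates no cycle
joins two different components, since otherwise a path from `b` to `a` in the old edges would close
up with it (`exists_path`), and so it merges exactly two classes (`card_quot_eq_succ`). As every
edge inside `Y` lies in exactly one `Qᵢ`, summing over `i` gives
`(edges inside Y) + ∑ cᵢ = k|Y|`, and the boundary formula follows. Since `Y` is nonempty, each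
`cᵢ` is at least `1`, which gives the lower bound.
-/

/-
Finite multigraphs are modelled by a vertex type `V`, an edge type `E`, and an
incidence map `ends : E → Sym2 V` assigning to each edge its unordered pair of
endvertices (parallel edges are allowed).
-/

namespace TConnectors

variable {V E : Type}

/-- A closed walk is a cycle if it uses at least one edge, repeats no edge, and
repeats no vertex except that its first and last vertices coincide. -/
def IsCycle {ends : E → Sym2 V} {v : V} (p : Walk ends v v) : Prop :=
  p.edges ≠ [] ∧ p.edges.Nodup ∧ p.support.tail.Nodup

/-- The set of edges `S` contains a cycle. -/
def HasCycleIn (ends : E → Sym2 V) (S : Set E) : Prop :=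
  ∃ (v : V) (p : Walk ends v v), IsCycle p ∧ ∀ e ∈ p.edges, e ∈ S

/-- The edge `e` has exactly one endvertex in `Y`. -/
def OneEndIn (ends : E → Sym2 V) (Y : Set V) (e : E) : Prop :=
  ∃ a b, ends e = s(a, b) ∧ a ∈ Y ∧ b ∉ Y

/-- Adjacency on `Y` in the subgraph induced on `Y` by the edges of `S`. -/
def inducedStep (ends : E → Sym2 V) (S : Set E) (Y : Set V) (x y : Y) : Prop :=
  ∃ e ∈ S, ends e = s(x.1, y.1)

/-- The number of connected components of the subgraph induced on `Y` by the
edges of `S` (isolated vertices of `Y` count as components): the number of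
classes of the equivalence generated by adjacency. -/
noncomputable def numComponents (ends : E → Sym2 V) (S : Set E) (Y : Set V) : ℕ :=
  Nat.card (Quot (inducedStep ends S Y))

/-! ### Merging two classes -/

/-- Adding one pair `a, b` from different classes to a generating relation merges exactly two
classes. -/
theorem card_quot_eq_succ {α : Type} [Finite α] {r r' : α → α → Prop} {a b : α}
    (h : ∀ x y, r' x y ↔ r x y ∨ s(x, y) = s(a, b)) (hab : Quot.mk r a ≠ Quot.mk r b) :
    Nat.card (Quot r) = Nat.card (Quot r') + 1 := by
  classical
  -- `g` redirects the class of `b` to that of `a`; its image is a transversal of the new classes.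
  let g : Quot r → Quot r := fun q => if q = Quot.mk r b then Quot.mk r a else q
  have hg : ∀ q, g q ≠ Quot.mk r b := by
    intro q
    by_cases hq : q = Quot.mk r b <;> simp [g, hq, hab]
  let p : Quot r → Quot r' :=
    Quot.lift (fun x => Quot.mk r' x) (fun x y hxy => Quot.sound ((h x y).2 (Or.inl hxy)))
  have hp : p (Quot.mk r a) = p (Quot.mk r b) := Quot.sound ((h a b).2 (Or.inr rfl))
  let f : Quot r' → {q : Quot r // q ≠ Quot.mk r b} :=
    Quot.lift (fun x => ⟨g (Quot.mk r x), hg _⟩) (by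
      intro x y hxy
      apply Subtype.ext
      change g _ = g _
      rcases (h x y).1 hxy with h1 | h1
      · rw [Quot.sound h1]
      · rcases Sym2.eq_iff.1 h1 with ⟨rfl, rfl⟩ | ⟨rfl, rfl⟩ <;> simp [g])
  let e : Quot r' ≃ {q : Quot r // q ≠ Quot.mk r b} :=
    { toFun := f
      invFun := fun q => p q.1
      left_inv := by
        intro q
        induction q using Quot.ind with
        | mk x =>
          change p (g (Quot.mk r x)) = Quot.mk r' x
          by_cases hq : Quot.mk r x = Quot.mk r b
          · simp only [g, hq, if_true]
            rw [hp, ← hq]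
          · simp only [g, hq, if_false]
            rfl
      right_inv := by
        rintro ⟨q, hq⟩
        induction q using Quot.ind with
        | mk x =>
          apply Subtype.ext
          change g (Quot.mk r x) = Quot.mk r x
          simp [g, hq] }
  rw [Nat.card_congr e]
  have := Fintype.ofFinite (Quot r)
  rw [Nat.card_eq_fintype_card, Nat.card_eq_fintype_card, Fintype.card_subtype_compl,
    Fintype.card_subtype_eq]
  have : 0 < Fintype.card (Quot r) := Fintype.card_pos_iff.2 ⟨Quot.mk r a⟩
  omega

/-! ### Paths in multigraphs -/

theorem Walk.mem_support_of_mem_edges {ends : E → Sym2 V} {u v : V} (p : Walk ends u v) :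
    ∀ e ∈ p.edges, ∀ x ∈ ends e, x ∈ p.support := by
  induction p with
  | nil v => simp [Walk.edges]
  | @cons u v w e he p ih =>
    intro e' he' x hx
    simp only [Walk.edges, List.mem_cons] at he'
    simp only [Walk.support, List.mem_cons]
    rcases he' with rfl | he'
    · rw [he, Sym2.mem_iff] at hx
      rcases hx with rfl | rfl
      · exact Or.inl rfl
      · right
        cases p <;> simp [Walk.support]
    · exact Or.inr (ih e' he' x hx)

theorem Walk.edges_nodup_of_support_nodup {ends : E → Sym2 V} {u v : V} (p : Walk ends u v)
    (h : p.support.Nodup) : p.edges.Nodup := by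
  induction p with
  | nil v => simp [Walk.edges]
  | @cons u v w e he p ih =>
    simp only [Walk.support, List.nodup_cons] at h
    simp only [Walk.edges, List.nodup_cons]
    refine ⟨fun hm => h.1 (p.mem_support_of_mem_edges e hm u ?_), ih h.2⟩
    rw [he]
    exact Sym2.mem_mk_left u v

/-- A walk with no repeated vertex can be cut short so as to start at any vertex on it. -/
theorem Walk.exists_suffix {ends : E → Sym2 V} {u v x : V} (p : Walk ends u v)
    (hx : x ∈ p.support) (h : p.support.Nodup) :
    ∃ q : Walk ends x v, q.support.Nodup ∧ ∀ e ∈ q.edges, e ∈ p.edges := by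
  induction p with
  | nil v =>
    simp only [Walk.support, List.mem_singleton] at hx
    subst hx
    exact ⟨.nil _, h, fun _ he => he⟩
  | @cons u v w e he p ih =>
    by_cases hxu : x = u
    · subst hxu
      exact ⟨.cons e he p, h, fun _ he => he⟩
    · simp only [Walk.support, List.mem_cons, List.nodup_cons, hxu, false_or] at hx h
      obtain ⟨q, hq, hs⟩ := ih hx h.2
      exact ⟨q, hq, fun e' he' => List.mem_cons_of_mem _ (hs e' he')⟩

/-- Two vertices in the same component are joined by a path. -/
theorem exists_path (ends : E → Sym2 V) (S : Set E) (Y : Set V) (a b : Y)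
    (hab : Quot.mk (inducedStep ends S Y) a = Quot.mk (inducedStep ends S Y) b) :
    ∃ p : Walk ends a.1 b.1, p.support.Nodup ∧ ∀ e ∈ p.edges, e ∈ S := by
  have hsymm : ∀ x y, inducedStep ends S Y x y → inducedStep ends S Y y x := by
    rintro x y ⟨e, he, h⟩
    exact ⟨e, he, by rw [h, Sym2.eq_swap]⟩
  have hrev : ∀ x y, Relation.ReflTransGen (inducedStep ends S Y) x y →
      Relation.ReflTransGen (inducedStep ends S Y) y x := by
    intro x y h
    induction h with
    | refl => exact .refl
    | tail _ h ih => exact .head (hsymm _ _ h) ih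
  have hgen : Relation.ReflTransGen (inducedStep ends S Y) a b := by
    have h := Quot.eqvGen_exact hab
    clear hab
    induction h with
    | rel x y h => exact .single h
    | refl x => exact .refl
    | symm x y _ ih => exact hrev _ _ ih
    | trans x y z _ _ h1 h2 => exact h1.trans h2
  induction hgen using Relation.ReflTransGen.head_induction_on with
  | refl => exact ⟨.nil _, by simp [Walk.support], by simp [Walk.edges]⟩
  | @head x y hxy _ ih =>
    obtain ⟨p, hp, hS⟩ := ih (Quot.sound hxy ▸ hab)
    obtain ⟨e, he, hxe⟩ := hxy
    by_cases hx : x.1 ∈ p.support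
    · obtain ⟨q, hq, hs⟩ := p.exists_suffix hx hp
      exact ⟨q, hq, fun e' he' => hS e' (hs e' he')⟩
    · refine ⟨.cons e hxe p, by simp [Walk.support, hx, hp], ?_⟩
      simpa [Walk.edges, he] using hS

/-! ### Edges and components of a forest -/

/-- In a forest on `Y`, the numbers of edges and of components add up to the number of vertices. -/
theorem card_add_numComponents [Finite V] (ends : E → Sym2 V) (Y : Set V) (S : Finset E)
    (hSY : ∀ e ∈ S, ∀ x ∈ ends e, x ∈ Y) (hS : ¬ HasCycleIn ends (S : Set E)) :
    S.card + numComponents ends (S : Set E) Y = Nat.card Y := by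
  classical
  induction S using Finset.induction_on with
  | empty =>
    have hr : ∀ x y : Y, ¬ inducedStep ends ((∅ : Finset E) : Set E) Y x y := by
      rintro x y ⟨e, he, _⟩
      simp at he
    let f : Y ≃ Quot (inducedStep ends ((∅ : Finset E) : Set E) Y) :=
      { toFun := Quot.mk _
        invFun := Quot.lift id (fun x y h => (hr x y h).elim)
        left_inv := fun x => rfl
        right_inv := by
          intro q
          induction q using Quot.ind with
          | mk x => rfl }
    rw [numComponents, ← Nat.card_congr f]
    simp
  | insert e S heS ih =>
    have ih' := ih (fun e' he' => hSY e' (Finset.mem_insert_of_mem he')) (by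
      rintro ⟨v, p, hp, hpS⟩
      exact hS ⟨v, p, hp, fun e' he' => Finset.mem_insert_of_mem (hpS e' he')⟩)
    obtain ⟨a, b, hab⟩ : ∃ a b, ends e = s(a, b) := by
      induction h : ends e using Sym2.ind with
      | _ a b => exact ⟨a, b, rfl⟩
    have haY : a ∈ Y := hSY e (Finset.mem_insert_self _ _) a (by simp [hab])
    have hbY : b ∈ Y := hSY e (Finset.mem_insert_self _ _) b (by simp [hab])
    have hne : Quot.mk (inducedStep ends (S : Set E) Y) ⟨a, haY⟩ ≠ Quot.mk _ ⟨b, hbY⟩ := by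
      intro heq
      obtain ⟨p, hp, hpS⟩ := exists_path ends S Y _ _ heq.symm
      refine hS ⟨a, .cons e hab p, ⟨by simp [Walk.edges], ?_, by simpa [Walk.support] using hp⟩, ?_⟩
      · simp only [Walk.edges, List.nodup_cons]
        exact ⟨fun h => heS (hpS e h), p.edges_nodup_of_support_nodup hp⟩
      · intro e' he'
        simp only [Walk.edges, List.mem_cons] at he'
        rcases he' with rfl | he'
        · simp
        · simpa using Or.inr (hpS e' he')
    have := card_quot_eq_succ (r' := inducedStep ends ((insert e S : Finset E) : Set E) Y)
      (by
        intro x y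
        have hxy : s(x, y) = s((⟨a, haY⟩ : Y), ⟨b, hbY⟩) ↔ ends e = s(x.1, y.1) := by
          rw [hab, eq_comm (a := s(a, b))]
          simp [Subtype.ext_iff]
        rw [hxy]
        simp only [inducedStep, Finset.coe_insert, Set.mem_insert_iff, or_and_right, exists_or,
          exists_eq_left]
        exact or_comm) hne
    rw [Finset.card_insert_of_notMem heS]
    unfold numComponents at ih' ⊢
    omega

/-! ### Counting incidences -/

/-- Summing the degrees over `Y` counts edges inside `Y` twice and boundary edges once. -/
theorem sum_degree_eq [Fintype V] [Fintype E] (ends : E → Sym2 V) (Y : Set V) [Fintype Y] :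
    ∑ v : Y, degree ends v.1 =
      2 * Nat.card {e : E // ∀ x ∈ ends e, x ∈ Y} + Nat.card {e : E // OneEndIn ends Y e} := by
  classical
  simp only [degree, Nat.card_eq_fintype_card, Fintype.card_subtype, Finset.card_filter]
  rw [Finset.sum_add_distrib, Finset.sum_comm,
    Finset.sum_comm (f := fun (v : Y) e => if ends e = _ then _ else _), ← Finset.sum_add_distrib, Finset.mul_sum, ← Finset.sum_add_distrib]
  refine Finset.sum_congr rfl fun e _ => ?_
  have hconv : ∀ (P : V → Prop) [DecidablePred P], (∑ v : Y, if P v.1 then 1 else 0) =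
      (Finset.univ.filter fun v : V => v ∈ Y ∧ P v).card := by
    intro P _
    rw [Finset.sum_boole, Nat.cast_id, ← Fintype.card_subtype, ← Fintype.card_subtype]
    exact Fintype.card_congr (Equiv.subtypeSubtypeEquivSubtypeInter (· ∈ Y) P)
  rw [hconv (fun v => v ∈ ends e), hconv (fun v => ends e = s(v, v))]
  induction h : ends e using Sym2.ind with
  | _ a b =>
    have hone : OneEndIn ends Y e ↔ (a ∈ Y ∧ b ∉ Y) ∨ (b ∈ Y ∧ a ∉ Y) := by
      constructor
      · rintro ⟨c, d, hcd, hc, hd⟩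
        rw [h] at hcd
        rcases Sym2.eq_iff.1 hcd with ⟨rfl, rfl⟩ | ⟨rfl, rfl⟩
        · exact Or.inl ⟨hc, hd⟩
        · exact Or.inr ⟨hc, hd⟩
      · rintro (⟨h1, h2⟩ | ⟨h1, h2⟩)
        · exact ⟨a, b, h, h1, h2⟩
        · exact ⟨b, a, by rw [h, Sym2.eq_swap], h1, h2⟩
    have hin : (∀ x ∈ s(a, b), x ∈ Y) ↔ a ∈ Y ∧ b ∈ Y := by simp
    have h1 : (Finset.univ.filter fun v : V => v ∈ Y ∧ v ∈ s(a, b)) =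
        ({a, b} : Finset V).filter (· ∈ Y) := by
      ext v; simp [and_comm]
    have h2 : (Finset.univ.filter fun v : V => v ∈ Y ∧ s(a, b) = s(v, v)) =
        if a = b then ({a} : Finset V).filter (· ∈ Y) else ∅ := by
      ext v
      split_ifs with hab
      · subst hab
        simp only [Finset.mem_filter, Finset.mem_univ, true_and, Sym2.eq_iff,
          Finset.mem_singleton]
        grind
      · simp only [Finset.mem_filter, Finset.mem_univ, true_and, Sym2.eq_iff,
          Finset.notMem_empty]
        grind
    rw [h1, h2]
    simp only [hone, hin]
    by_cases hab : a = b
    · subst hab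
      by_cases ha : a ∈ Y <;> simp [ha, Finset.filter_singleton]
    · by_cases ha : a ∈ Y <;> by_cases hb : b ∈ Y <;>
        simp [ha, hb, hab, Finset.filter_insert, Finset.filter_singleton]

/-- Let the edge set of a finite graph `Q` be partitioned
into `k` subgraphs `Q₁, …, Q_k`, and let `Y` be a nonempty set of vertices such
that every vertex of `Y` has degree exactly `2k` in `Q` and every induced
subgraph `Qᵢ[Y]` is a forest.  Then the number of edges of `Q` with exactly one
endvertex in `Y` equals `2(c₁ + ⋯ + c_k)`, where `cᵢ` is the number of
connected components of `Qᵢ[Y]`; in particular it is at least `2k`. -/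
theorem boundary_eq_two_mul_components [Fintype V] [Fintype E]
    (ends : E → Sym2 V) (k : ℕ) (hk : 0 < k)
    (Qs : Fin k → Set E)
    (hpart : ∀ e : E, ∃! i : Fin k, e ∈ Qs i)
    (Y : Set V) (hY : Y.Nonempty)
    (hdeg : ∀ v ∈ Y, degree ends v = 2 * k)
    (hforest : ∀ i, ¬ HasCycleIn ends {e | e ∈ Qs i ∧ ∀ x ∈ ends e, x ∈ Y}) :
    Nat.card {e : E // OneEndIn ends Y e} =
        2 * ∑ i : Fin k, numComponents ends (Qs i) Y ∧
      2 * k ≤ Nat.card {e : E // OneEndIn ends Y e} := by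
  classical
  have hsum := sum_degree_eq ends Y
  rw [Finset.sum_congr rfl fun v _ => hdeg v.1 v.2, Finset.sum_const, Finset.card_univ,
    smul_eq_mul, ← Nat.card_eq_fintype_card] at hsum
  let I : Fin k → Finset E := fun i => Finset.univ.filter fun e => e ∈ Qs i ∧ ∀ x ∈ ends e, x ∈ Y
  have hI : ∀ i, ((I i : Finset E) : Set E) = {e | e ∈ Qs i ∧ ∀ x ∈ ends e, x ∈ Y} := by
    intro i
    ext e
    simp [I]
  -- Edges of `Qᵢ` with an endvertex outside `Y` contribute nothing to adjacency on `Y`.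
  have hcomp : ∀ i, numComponents ends (Qs i) Y = numComponents ends (I i : Set E) Y := by
    intro i
    have : inducedStep ends (Qs i) Y = inducedStep ends (I i : Set E) Y := by
      funext x y
      apply propext
      constructor
      · rintro ⟨e, he, h⟩
        refine ⟨e, ?_, h⟩
        rw [hI]
        exact ⟨he, by simp [h]⟩
      · rintro ⟨e, he, h⟩
        rw [hI] at he
        exact ⟨e, he.1, h⟩
    unfold numComponents
    rw [this]
  have hfor : ∀ i, (I i).card + numComponents ends (Qs i) Y = Nat.card Y := by
    intro i
    rw [hcomp]
    refine card_add_numComponents ends Y (I i) (fun e he => ?_) (by rw [hI]; exact hforest i)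
    exact (Finset.mem_filter.1 he).2.2
  have hinside : Nat.card {e : E // ∀ x ∈ ends e, x ∈ Y} = ∑ i, (I i).card := by
    rw [Nat.card_eq_fintype_card, Fintype.card_subtype, ← Finset.card_biUnion]
    · congr 1
      ext e
      obtain ⟨i, hi, -⟩ := hpart e
      simp only [I, Finset.mem_filter, Finset.mem_univ, true_and, Finset.mem_biUnion]
      exact ⟨fun h => ⟨i, hi, h⟩, fun ⟨_, _, h⟩ => h⟩
    · intro i _ j _ hij
      refine Finset.disjoint_left.2 fun e hei hej => hij ?_
      exact (hpart e).unique (Finset.mem_filter.1 hei).2.1 (Finset.mem_filter.1 hej).2.1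
  have htot : ∑ i, (I i).card + ∑ i, numComponents ends (Qs i) Y = k * Nat.card Y := by
    rw [← Finset.sum_add_distrib, Finset.sum_congr rfl fun i _ => hfor i]
    simp
  have hmain : Nat.card {e : E // OneEndIn ends Y e} =
      2 * ∑ i : Fin k, numComponents ends (Qs i) Y := by
    rw [hinside] at hsum
    linarith
  refine ⟨hmain, ?_⟩
  have hpos : ∀ i ∈ Finset.univ, 1 ≤ numComponents ends (Qs i) Y := by
    intro i _
    obtain ⟨y, hy⟩ := hY
    have : Nonempty (Quot (inducedStep ends (Qs i) Y)) := ⟨Quot.mk _ ⟨y, hy⟩⟩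
    exact Nat.card_pos
  have := Finset.sum_le_sum hpos
  simp only [Finset.sum_const, Finset.card_univ, Fintype.card_fin, smul_eq_mul, mul_one] at this
  omega


end TConnectors
end
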